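/- arXiv:1604.06329 — 4 statements merged into one kernel-verified Lean document; each statement's English description precedes it below -/
import Mathlib

section
/- Let (X, I, q, g) be a deterministic commutative MDP such that for every x ∈ X the MDP starting at x has a uniform value in pure strategies v*(x). Then for every initial state x₁ ∈ X there exists a 0-optimal (mixed) strategy: a Borel probability measure μ on I^ℕ (with the product topology, I discrete) such that lim_{n→∞} ∫_{I^ℕ} γ_n(x₁, a) dμ(a) = v*(x₁). -/
open Filter MeasureTheory Topology

noncomputable section

/-- The play induced by an initial state `x₁` and a pure strategy `a` in a deterministic MDP:
`x₀ = x₁` and `x_{t+1} = q (x_t) (a t)`. -/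
def play {X I : Type*} (q : X → I → X) (x₁ : X) (a : ℕ → I) : ℕ → X
  | 0 => x₁
  | t + 1 => q (play q x₁ a t) (a t)

/-- The `n`-stage average payoff `γ_n(x₁, a)`. -/
def payoff {X I : Type*} (q : X → I → X) (g : X → I → ℝ) (x₁ : X) (a : ℕ → I) (n : ℕ) : ℝ :=
  (1 / (n : ℝ)) * ∑ t ∈ Finset.range n, g (play q x₁ a t) (a t)

/-- The `n`-stage value `v_n(x₁)`. -/
def nValue {X I : Type*} (q : X → I → X) (g : X → I → ℝ) (x₁ : X) (n : ℕ) : ℝ :=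
  ⨆ a : ℕ → I, payoff q g x₁ a n

/-- The MDP starting at `x₁` has a uniform value `v` in pure strategies. -/
def HasUniformValuePure {X I : Type*} (q : X → I → X) (g : X → I → ℝ) (x₁ : X) (v : ℝ) : Prop :=
  (∀ ε > (0 : ℝ), ∃ a : ℕ → I, v - ε ≤ liminf (fun n => payoff q g x₁ a n) atTop) ∧
    limsup (fun n => nValue q g x₁ n) atTop ≤ v

/-!
Commutativity makes the state reached by a play depend only on how often each action was used.
By Dickson's lemma, among nearly optimal strategies of increasing precision there are infinitely
many whose total action counts increase; the state reached by the first of them at any time then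
leads to states visited by arbitrarily good ones, so its play never loses value. Hence from every
state there are nearly optimal strategies that keep the value constant along their plays.

Such a strategy can be left at any time `T` for a better one. Randomizing uniformly over many
widely spaced switching times improves the final precision at a small cost: at each stage `n`,
at most one of the switching times is so recent that the new strategy has not paid off yet.
Iterating, the expected payoffs up to later and later stages get frozen, and the limit of the
resulting mixed strategies exists by compactness.
-/

section PayoffSequences

/-- `y` is improvable to level `c` within `K` if, for all late enough dates `T`, some sequence of
`K` agrees with `y` up to `T` and is at least `c` from `T` on. Applied to sequences of expected
payoffs, this is the single step of the construction of a `0`-optimal mixed strategy. -/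
def IsImprovable (K : Set (ℕ → ℝ)) (c : ℝ) (y : ℕ → ℝ) : Prop :=
  ∀ᶠ T in atTop, ∃ z ∈ K, Set.EqOn z y (Set.Iic T) ∧ ∀ n ≥ T, c ≤ z n

lemma convex_setOf_isImprovable {K : Set (ℕ → ℝ)} (hK : Convex ℝ K) (c : ℝ) :
    Convex ℝ {y | IsImprovable K c y} := by
  intro y₁ hy₁ y₂ hy₂ r s hr hs hrs
  filter_upwards [hy₁, hy₂] with T ⟨z₁, hz₁, heq₁, hc₁⟩ ⟨z₂, hz₂, heq₂, hc₂⟩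
  refine ⟨r • z₁ + s • z₂, hK hz₁ hz₂ hr hs hrs, fun n hn => ?_, fun n hn => ?_⟩
  · simp only [Pi.add_apply, Pi.smul_apply, heq₁ hn, heq₂ hn]
  · exact convex_Ici c (hc₁ n hn) (hc₂ n hn) hr hs hrs

lemma card_mul_sub_le_sum {ι : Type*} {s : Finset ι} {f : ι → ℝ} {c d : ℝ} (hd : 0 ≤ d)
    (hf : ∀ i ∈ s, c - d ≤ f i) (hs : {i ∈ (s : Set ι) | f i < c}.Subsingleton) :
    s.card * c - d ≤ ∑ i ∈ s, f i := by
  classical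
  suffices h : -d ≤ ∑ i ∈ s, (f i - c) by
    rw [Finset.sum_sub_distrib, Finset.sum_const, nsmul_eq_mul] at h
    linarith
  by_cases hex : ∃ i ∈ s, f i < c
  · obtain ⟨i, his, hi⟩ := hex
    have hrest : 0 ≤ ∑ j ∈ s.erase i, (f j - c) := Finset.sum_nonneg fun j hj => by
      obtain ⟨hji, hjs⟩ := Finset.mem_erase.1 hj
      exact sub_nonneg.2 <| not_lt.1 fun hlt => hji (hs ⟨hjs, hlt⟩ ⟨his, hi⟩)
    rw [← Finset.add_sum_erase s _ his]
    linarith [hf i his]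
  · push Not at hex
    exact (neg_nonpos.2 hd).trans (Finset.sum_nonneg fun i hi => sub_nonneg.2 (hex i hi))

lemma exists_strictMono_forall_ge {P : ℕ → ℕ → Prop} (hP : ∀ m, ∀ᶠ n in atTop, P m n) (m₀ : ℕ) :
    ∃ φ : ℕ → ℕ, StrictMono φ ∧ φ 0 = m₀ ∧ ∀ j, ∀ n ≥ φ (j + 1), P (φ j) n := by
  choose N hN using fun m =>
    ((eventually_forall_ge_atTop.2 (hP m)).and (eventually_gt_atTop m)).exists
  have hsucc (j : ℕ) : N^[j + 1] m₀ = N (N^[j] m₀) := Function.iterate_succ_apply' N j m₀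
  refine ⟨fun j => N^[j] m₀, strictMono_nat_of_lt_succ fun j => ?_, rfl, fun j n hn => ?_⟩
  · rw [hsucc]
    exact (hN _).2
  · exact (hN _).1 n (hsucc j ▸ hn)

/- The improved sequence is the average of sequences of `S` branching off `y` at dates `φ j`, where
`φ (j + 1)` is so late that the sequence branching off at `φ j` stays above `m` from then on. -/
lemma isImprovable_convexHull {S : Set (ℕ → ℝ)} {y : ℕ → ℝ} {b c m : ℝ} (hcm : c < m)
    (hb : ∀ z ∈ S, ∀ n, b ≤ z n) (hy : ∀ᶠ n in atTop, m ≤ y n)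
    (hS : ∀ T, ∃ z ∈ S, Set.EqOn z y (Set.Iic T) ∧ ∀ᶠ n in atTop, m ≤ z n) :
    IsImprovable (convexHull ℝ S) c y := by
  choose z hzS hzy hzm using hS
  obtain ⟨L, hL⟩ := exists_nat_gt (|m - b| / (m - c))
  have hL₀ : (0 : ℝ) < L := (div_nonneg (abs_nonneg _) (sub_pos.2 hcm).le).trans_lt hL
  filter_upwards [eventually_forall_ge_atTop.2 hy] with T hT
  obtain ⟨φ, hφ, rfl, hφm⟩ := exists_strictMono_forall_ge hzm T
  have hbad {n j : ℕ} (hn : φ 0 ≤ n) (hlt : z (φ j) n < m) : φ j < n ∧ n < φ (j + 1) := by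
    constructor <;> by_contra! hle
    · exact hlt.not_ge (hzy (φ j) hle ▸ hT n hn)
    · exact hlt.not_ge (hφm j n hle)
  refine ⟨∑ j ∈ Finset.range L, (L : ℝ)⁻¹ • z (φ j), ?_, fun n hn => ?_, fun n hn => ?_⟩
  · refine (convex_convexHull ℝ S).sum_mem (fun _ _ => by positivity) ?_
      fun j _ => subset_convexHull ℝ S (hzS (φ j))
    simp [hL₀.ne']
  · have heq (j : ℕ) : z (φ j) n = y n :=
      hzy (φ j) (hn.trans (hφ.monotone (Nat.zero_le j)) : n ≤ φ j)
    simp [heq, hL₀.ne']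
  · have hsum : L * m - |m - b| ≤ ∑ j ∈ Finset.range L, z (φ j) n := by
      have hlow (j : ℕ) : m - |m - b| ≤ z (φ j) n := by
        linarith [hb _ (hzS (φ j)) n, le_abs_self (m - b)]
      nth_rewrite 1 [← Finset.card_range L]
      refine card_mul_sub_le_sum (abs_nonneg _) (fun j _ => hlow j) ?_
      rintro i ⟨-, hi⟩ j ⟨-, hj⟩
      obtain ⟨hi₁, hi₂⟩ := hbad hn hi
      obtain ⟨hj₁, hj₂⟩ := hbad hn hj
      have hij := hφ.lt_iff_lt.1 (hi₁.trans hj₂)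
      have hji := hφ.lt_iff_lt.1 (hj₁.trans hi₂)
      omega
    rw [div_lt_iff₀ (sub_pos.2 hcm)] at hL
    rw [← Finset.smul_sum, Pi.smul_apply, Finset.sum_apply, smul_eq_mul, le_inv_mul_iff₀ hL₀]
    linarith

lemma exists_mem_closure_forall_eventually_le {K : ℕ → Set (ℕ → ℝ)} {c : ℕ → ℝ}
    (hc : Monotone c) (hK₀ : (K 0).Nonempty)
    (hK : ∀ k, ∀ y ∈ K k, IsImprovable (K (k + 1)) (c k) y) :
    ∃ y ∈ closure (⋃ k, K k), ∀ k, ∀ᶠ n in atTop, c k ≤ y n := by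
  choose T hT z hzK hzy hzc using fun k (y : K k) =>
    ((eventually_ge_atTop k).and (hK k y y.2)).exists
  let y (k : ℕ) : K k := Nat.rec ⟨hK₀.some, hK₀.some_mem⟩ (fun k y => ⟨z k y, hzK k y⟩) k
  have hy_succ {k n : ℕ} (hn : n ≤ T k (y k)) : (y (k + 1)).1 n = (y k).1 n := hzy k (y k) hn
  have hy_const {n k : ℕ} (hk : n ≤ k) : (y k).1 n = (y n).1 n := by
    induction k, hk using Nat.le_induction with
    | base => rfl
    | succ k hk ih => rw [hy_succ (hk.trans (hT k (y k))), ih]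
  have hy_le {k n j : ℕ} (hn : T k (y k) ≤ n) (hj : k + 1 ≤ j) : c k ≤ (y j).1 n := by
    induction j, hj using Nat.le_induction with
    | base => exact hzc k (y k) n hn
    | succ j hj ih =>
      rcases le_total n (T j (y j)) with h | h
      · exact (hy_succ h).symm ▸ ih
      · exact (hc (by omega)).trans (hzc j (y j) n h)
  refine ⟨fun n => (y n).1 n, ?_, fun k => ?_⟩
  · have hlim : Tendsto (fun k => (y k).1) atTop (𝓝 fun n => (y n).1 n) :=
      tendsto_pi_nhds.2 fun n => tendsto_const_nhds.congr' <|
        (eventually_ge_atTop n).mono fun k hk => (hy_const hk).symm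
    exact mem_closure_of_tendsto hlim (.of_forall fun k => Set.mem_iUnion_of_mem k (y k).2)
  · filter_upwards [eventually_ge_atTop (T k (y k)), eventually_ge_atTop (k + 1)] with n hT hk
    exact hy_le hT hk

theorem exists_mem_closedConvexHull_forall_lt_eventually_le {S : Set (ℕ → ℝ)} {V b : ℝ}
    (hS₀ : S.Nonempty) (hb : ∀ y ∈ S, ∀ n, b ≤ y n)
    (hS : ∀ y ∈ S, ∀ T, ∀ c < V, ∃ z ∈ S, Set.EqOn z y (Set.Iic T) ∧ ∀ᶠ n in atTop, c ≤ z n) :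
    ∃ y ∈ closedConvexHull ℝ S, ∀ c < V, ∀ᶠ n in atTop, c ≤ y n := by
  obtain ⟨u, hu, huV, hu_lim⟩ := exists_seq_strictMono_tendsto V
  let S' (k : ℕ) : Set (ℕ → ℝ) := {y ∈ S | ∀ᶠ n in atTop, u (k + 1) ≤ y n}
  have hS'₀ : (convexHull ℝ (S' 0)).Nonempty := by
    obtain ⟨y, hy⟩ := hS₀
    obtain ⟨z, hzS, -, hz⟩ := hS y hy 0 (u 1) (huV 1)
    exact convexHull_nonempty_iff.2 ⟨z, hzS, hz⟩
  have himprove (k : ℕ) (y : ℕ → ℝ) (hy : y ∈ convexHull ℝ (S' k)) :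
      IsImprovable (convexHull ℝ (S' (k + 1))) (u k) y := by
    refine convexHull_min (fun y hy => ?_)
      (convex_setOf_isImprovable (convex_convexHull ℝ (S' (k + 1))) (u k)) hy
    refine isImprovable_convexHull (hu k.lt_succ_self) (fun z hz => hb z hz.1) hy.2 fun T => ?_
    obtain ⟨z, hzS, hzy, hz⟩ := hS y hy.1 T _ (huV (k + 2))
    exact ⟨z, ⟨hzS, hz⟩, hzy, hz.mono fun n hn => (hu (k + 1).lt_succ_self).le.trans hn⟩
  obtain ⟨y, hy, hyu⟩ := exists_mem_closure_forall_eventually_le hu.monotone hS'₀ himprove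
  refine ⟨y, closure_minimal (Set.iUnion_subset fun k => ?_) isClosed_closedConvexHull hy,
    fun c hc => ?_⟩
  · exact (convexHull_mono (Set.sep_subset S _)).trans convexHull_subset_closedConvexHull
  · obtain ⟨k, hk⟩ := (hu_lim.eventually_const_lt hc).exists
    exact (hyu k).mono fun n hn => hk.le.trans hn

end PayoffSequences

section Expectations

variable {A ι : Type*} [TopologicalSpace A] [CompactSpace A] [MeasurableSpace A] {f : A → ι → ℝ}

lemma integrable_apply_of_continuous [OpensMeasurableSpace A] (hf : Continuous f) (i : ι)
    (μ : Measure A) [IsFiniteMeasure μ] : Integrable (fun a => f a i) μ :=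
  ((continuous_apply i).comp hf).integrable_of_hasCompactSupport (.of_compactSpace _)

lemma convex_range_integral [OpensMeasurableSpace A] (hf : Continuous f) :
    Convex ℝ (Set.range fun (μ : ProbabilityMeasure A) i => ∫ a, f a i ∂(μ : Measure A)) := by
  rintro _ ⟨μ, rfl⟩ _ ⟨ν, rfl⟩ r s hr hs hrs
  lift r to NNReal using hr
  lift s to NNReal using hs
  have hint (κ : Measure A) [IsFiniteMeasure κ] (i : ι) := integrable_apply_of_continuous hf i κ
  refine ⟨⟨r • (μ : Measure A) + s • (ν : Measure A), ⟨?_⟩⟩, funext fun i => ?_⟩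
  · rw [Measure.add_apply, Measure.smul_apply, Measure.smul_apply, measure_univ, measure_univ]
    simp only [ENNReal.smul_def, smul_eq_mul, mul_one]
    exact_mod_cast hrs
  · exact (integral_add_measure (hint _ i) (hint _ i)).trans <| by
      rw [integral_smul_nnreal_measure, integral_smul_nnreal_measure]
      rfl

lemma isClosed_range_integral [T2Space A] [BorelSpace A] (hf : Continuous f) :
    IsClosed (Set.range fun (μ : ProbabilityMeasure A) i => ∫ a, f a i ∂(μ : Measure A)) :=
  (isCompact_range <| continuous_pi fun i =>
    ProbabilityMeasure.continuous_integral_continuousMap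
      (⟨_, (continuous_apply i).comp hf⟩ : C(A, ℝ))).isClosed

theorem exists_probabilityMeasure_integral_eq [T2Space A] [BorelSpace A] (hf : Continuous f)
    {y : ι → ℝ} (hy : y ∈ closedConvexHull ℝ (Set.range f)) :
    ∃ μ : ProbabilityMeasure A, ∀ i, ∫ a, f a i ∂(μ : Measure A) = y i := by
  have hdirac : Set.range f ⊆
      Set.range fun (μ : ProbabilityMeasure A) i => ∫ a, f a i ∂(μ : Measure A) := by
    rintro _ ⟨a, rfl⟩
    exact ⟨⟨Measure.dirac a, inferInstance⟩, funext fun i =>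
      integral_dirac' _ _ ((continuous_apply i).comp hf).stronglyMeasurable⟩
  obtain ⟨μ, rfl⟩ := closedConvexHull_min hdirac (convex_range_integral hf)
    (isClosed_range_integral hf) hy
  exact ⟨μ, fun _ => rfl⟩

end Expectations

section Plays

variable {X I : Type*} {q : X → I → X} {g : X → I → ℝ}

lemma play_add (x : X) (a : ℕ → I) (T t : ℕ) :
    play q x a (T + t) = play q (play q x a T) (fun s => a (T + s)) t := by
  induction t with
  | zero => rfl
  | succ t ih => rw [← add_assoc, play, ih, play]

lemma play_congr {x : X} {a b : ℕ → I} {T : ℕ} (h : ∀ t < T, a t = b t) :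
    play q x a T = play q x b T := by
  induction T with
  | zero => rfl
  | succ T ih => rw [play, play, ih fun t ht => h t (by omega), h T T.lt_succ_self]

lemma payoff_congr {x : X} {a b : ℕ → I} {n : ℕ} (h : ∀ t < n, a t = b t) :
    payoff q g x a n = payoff q g x b n := by
  unfold payoff
  congr 1
  refine Finset.sum_congr rfl fun t ht => ?_
  have htn := Finset.mem_range.1 ht
  rw [play_congr fun s hs => h s (hs.trans htn), h t htn]

/-- The pure strategy that follows `a` during the first `T` stages and `b` from then on, `b` being
started afresh. -/
def splice (a : ℕ → I) (T : ℕ) (b : ℕ → I) : ℕ → I :=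
  fun t => if t < T then a t else b (t - T)

lemma splice_of_lt {a b : ℕ → I} {T t : ℕ} (h : t < T) : splice a T b t = a t := if_pos h

lemma splice_add (a b : ℕ → I) (T t : ℕ) : splice a T b (T + t) = b t := by simp [splice]

lemma play_splice_of_le {x : X} {a b : ℕ → I} {T t : ℕ} (h : t ≤ T) :
    play q x (splice a T b) t = play q x a t :=
  play_congr fun _ hs => splice_of_lt (hs.trans_le h)

lemma play_splice_add (x : X) (a b : ℕ → I) (T t : ℕ) :
    play q x (splice a T b) (T + t) = play q (play q x a T) b t := by
  simp only [play_add, play_splice_of_le le_rfl, splice_add]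

lemma continuous_payoff [TopologicalSpace I] [DiscreteTopology I] (x : X) :
    Continuous (payoff q g x) := by
  have hact (t : ℕ) : IsLocallyConstant fun a : ℕ → I => a t :=
    (IsLocallyConstant.iff_continuous _).2 (continuous_apply t)
  have hplay (t : ℕ) : IsLocallyConstant fun a : ℕ → I => play q x a t := by
    induction t with
    | zero => exact .const x
    | succ t ih => exact ih.comp₂ (hact t) q
  exact continuous_pi fun n => continuous_const.mul <|
    continuous_finsetSum _ fun t _ => ((hplay t).comp₂ (hact t) g).continuous

end Plays

section UniformValue

variable {X I : Type*} {q : X → I → X} {g : X → I → ℝ} {x : X} {a b : ℕ → I} {c V C : ℝ}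

lemma abs_payoff_le (hg : ∀ x i, |g x i| ≤ C) (x : X) (a : ℕ → I) (n : ℕ) :
    |payoff q g x a n| ≤ C := by
  have hC : 0 ≤ C := (abs_nonneg _).trans (hg x (a 0))
  have hsum : |∑ t ∈ Finset.range n, g (play q x a t) (a t)| ≤ n * C := by
    simpa using (Finset.abs_sum_le_sum_abs _ (Finset.range n)).trans
      (Finset.sum_le_card_nsmul _ _ C fun t _ => hg _ _)
  rw [payoff, abs_mul, abs_of_nonneg (by positivity), one_div_mul_eq_div]
  exact div_le_of_le_mul₀ n.cast_nonneg hC (hsum.trans_eq (mul_comm _ _))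

lemma payoff_le_nValue (hg : ∀ x i, |g x i| ≤ C) (x : X) (a : ℕ → I) (n : ℕ) :
    payoff q g x a n ≤ nValue q g x n :=
  le_ciSup (f := fun a => payoff q g x a n)
    ⟨C, Set.forall_mem_range.2 fun b => (abs_le.1 (abs_payoff_le hg x b n)).2⟩ a

lemma nValue_le (hg : ∀ x i, |g x i| ≤ C) (x : X) (n : ℕ) : nValue q g x n ≤ |C| :=
  Real.iSup_le (fun a => (abs_le.1 (abs_payoff_le hg x a n)).2.trans (le_abs_self C))
    (abs_nonneg C)

lemma integral_payoff_le_nValue [Finite I] [TopologicalSpace I] [DiscreteTopology I]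
    [MeasurableSpace I] [BorelSpace I] (hg : ∀ x i, |g x i| ≤ C) (x : X) (n : ℕ)
    (μ : Measure (ℕ → I)) [IsProbabilityMeasure μ] :
    ∫ a, payoff q g x a n ∂μ ≤ nValue q g x n :=
  (integral_mono (integrable_apply_of_continuous (continuous_payoff x) n μ) (integrable_const _)
    fun a => payoff_le_nValue hg x a n).trans_eq (by simp)

/-- The strategy `a` guarantees `c` in the long run from `x`. For bounded payoffs this means
`c ≤ liminf (payoff q g x a) atTop`; the quantified form needs no boundedness side condition. -/
def Guarantees (q : X → I → X) (g : X → I → ℝ) (x : X) (a : ℕ → I) (c : ℝ) : Prop :=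
  ∀ c' < c, ∀ᶠ n in atTop, c' < payoff q g x a n

lemma Guarantees.mono {c' : ℝ} (h : Guarantees q g x a c) (hc : c' ≤ c) :
    Guarantees q g x a c' := fun d hd => h d (hd.trans_le hc)

lemma HasUniformValuePure.exists_guarantees (h : HasUniformValuePure q g x V)
    (hg : ∀ x i, |g x i| ≤ C) (hc : c < V) : ∃ a, Guarantees q g x a c := by
  obtain ⟨a, ha⟩ := h.1 (V - c) (sub_pos.2 hc)
  have hbdd : IsBoundedUnder (· ≥ ·) atTop (payoff q g x a) :=
    isBoundedUnder_of ⟨-C, fun n => (abs_le.1 (abs_payoff_le hg x a n)).1⟩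
  exact ⟨a, fun c' hc' => eventually_lt_of_lt_liminf (by linarith) hbdd⟩

lemma HasUniformValuePure.eventually_nValue_lt (h : HasUniformValuePure q g x V)
    (hg : ∀ x i, |g x i| ≤ C) (hc : V < c) : ∀ᶠ n in atTop, nValue q g x n < c :=
  eventually_lt_of_limsup_lt (h.2.trans_lt hc) (isBoundedUnder_of ⟨|C|, nValue_le hg x⟩)

lemma Guarantees.le_of_hasUniformValuePure (ha : Guarantees q g x a c)
    (h : HasUniformValuePure q g x V) (hg : ∀ x i, |g x i| ≤ C) : c ≤ V := by
  by_contra! hlt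
  obtain ⟨d, hVd, hdc⟩ := exists_between hlt
  obtain ⟨n, hn, hn'⟩ := ((ha d hdc).and (h.eventually_nValue_lt hg hVd)).exists
  exact (hn.trans_le (payoff_le_nValue hg x a n)).not_gt hn'

lemma payoff_tail_eq_birkhoffAverage (x : X) (a : ℕ → I) (T n : ℕ) :
    payoff q g (play q x a T) (fun t => a (T + t)) n =
      birkhoffAverage ℝ Nat.succ (fun t => g (play q x a t) (a t)) n T := by
  simp only [payoff, birkhoffAverage, birkhoffSum, one_div, smul_eq_mul, Nat.succ_iterate,
    ← play_add]

lemma eventually_lt_of_tendsto_sub {u w : ℕ → ℝ} (hw : ∀ c' < c, ∀ᶠ n in atTop, c' < w n)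
    (h : Tendsto (fun n => u n - w n) atTop (𝓝 0)) : ∀ c' < c, ∀ᶠ n in atTop, c' < u n := by
  intro c' hc'
  obtain ⟨d, hd, hdc⟩ := exists_between hc'
  filter_upwards [hw d hdc, h.eventually_const_lt (sub_neg.2 hd)] with n hn hsub
  linarith

lemma guarantees_tail_iff (hg : ∀ x i, |g x i| ≤ C) (T : ℕ) :
    Guarantees q g (play q x a T) (fun t => a (T + t)) c ↔ Guarantees q g x a c := by
  induction T with
  | zero => simp only [play, zero_add]
  | succ T ih =>
    have hsub : Tendsto (fun n => payoff q g (play q x a (T + 1)) (fun t => a (T + 1 + t)) n -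
        payoff q g (play q x a T) (fun t => a (T + t)) n) atTop (𝓝 0) := by
      simp only [payoff_tail_eq_birkhoffAverage]
      refine tendsto_birkhoffAverage_apply_sub_birkhoffAverage' ℝ ?_ Nat.succ T
      exact isBounded_iff_forall_norm_le.2 ⟨C, Set.forall_mem_range.2 fun t => hg _ _⟩
    rw [← ih]
    exact ⟨fun h => eventually_lt_of_tendsto_sub h (by simpa using hsub.neg),
      fun h => eventually_lt_of_tendsto_sub h hsub⟩

lemma guarantees_splice_iff (hg : ∀ x i, |g x i| ≤ C) (T : ℕ) :
    Guarantees q g x (splice a T b) c ↔ Guarantees q g (play q x a T) b c := by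
  rw [← guarantees_tail_iff hg T, play_splice_of_le le_rfl]
  simp only [splice_add]

lemma Guarantees.le_value_play {v : X → ℝ} (ha : Guarantees q g x a c)
    (hg : ∀ x i, |g x i| ≤ C) (hv : ∀ x, HasUniformValuePure q g x (v x)) (t : ℕ) :
    c ≤ v (play q x a t) :=
  ((guarantees_tail_iff hg t).2 ha).le_of_hasUniformValuePure (hv _) hg

lemma value_step_le {v : X → ℝ} (hg : ∀ x i, |g x i| ≤ C)
    (hv : ∀ x, HasUniformValuePure q g x (v x)) (x : X) (i : I) : v (q x i) ≤ v x := by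
  refine le_of_forall_lt_imp_le_of_dense fun c hc => ?_
  obtain ⟨b, hb⟩ := (hv (q x i)).exists_guarantees hg hc
  have hsplice : Guarantees q g x (splice (fun _ => i) 1 b) c := (guarantees_splice_iff hg 1).2 hb
  exact hsplice.le_of_hasUniformValuePure (hv x) hg

end UniformValue

section Commutative

variable {X I : Type*} {q : X → I → X} {a b : ℕ → I}

/-- The actions played by `a` in the first `t` stages, with multiplicity. -/
def actionsBefore (a : ℕ → I) (t : ℕ) : Multiset I := (Multiset.range t).map a

lemma actionsBefore_mono (a : ℕ → I) : Monotone (actionsBefore a) :=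
  fun _ _ h => Multiset.map_le_map (Multiset.range_le.2 h)

lemma play_eq_foldl [RightCommutative q] (x : X) (a : ℕ → I) (t : ℕ) :
    play q x a t = (actionsBefore a t).foldl q x := by
  induction t with
  | zero => rfl
  | succ t ih =>
    have hsucc : actionsBefore a (t + 1) = actionsBefore a t + {a t} := by
      rw [actionsBefore, Multiset.range_succ, Multiset.map_cons, ← Multiset.singleton_add,
        add_comm, actionsBefore]
    rw [play, ih, hsucc, Multiset.foldl_add]
    rfl

lemma apply_play_le_of_actionsBefore_le {α : Type*} [Preorder α] [RightCommutative q] {v : X → α}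
    (hv : ∀ x i, v (q x i) ≤ v x) {t t' : ℕ} (h : actionsBefore a t ≤ actionsBefore b t') (x : X) :
    v (play q x b t') ≤ v (play q x a t) := by
  obtain ⟨s, hs⟩ := Multiset.le_iff_exists_add.1 h
  rw [play_eq_foldl, play_eq_foldl, hs, Multiset.foldl_add]
  exact Multiset.foldl_induction' q _ (fun _ => True) (fun y => v y ≤ v _) s
    (fun i y _ hy => (hv y i).trans hy) le_rfl fun _ _ => trivial

/-- The total number of times `a` uses the action `i`, possibly infinite. -/
def totalCount [DecidableEq I] (a : ℕ → I) (i : I) : ℕ∞ := ⨆ t, ((actionsBefore a t).count i : ℕ∞)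

lemma exists_actionsBefore_le [Finite I] [DecidableEq I] (h : totalCount a ≤ totalCount b) (t : ℕ) :
    ∃ t', actionsBefore a t ≤ actionsBefore b t' := by
  have hcount (i : I) : ∃ t', (actionsBefore a t).count i ≤ (actionsBefore b t').count i := by
    rcases hk : (actionsBefore a t).count i with _ | k
    · exact ⟨0, Nat.zero_le _⟩
    · have hkb : (k : ℕ∞) < totalCount b i := calc
        (k : ℕ∞) < (actionsBefore a t).count i := by
          exact_mod_cast k.lt_succ_self.trans_eq hk.symm
        _ ≤ totalCount a i := le_iSup (fun t => ((actionsBefore a t).count i : ℕ∞)) t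
        _ ≤ totalCount b i := h i
      obtain ⟨t', ht'⟩ := lt_iSup_iff.1 hkb
      exact ⟨t', by exact_mod_cast ht'⟩
  choose T hT using hcount
  obtain ⟨N, hN⟩ := (Set.finite_range T).bddAbove
  exact ⟨N, Multiset.le_iff_count.2 fun i => (hT i).trans <|
    Multiset.count_le_of_le i <| actionsBefore_mono b <| hN <| Set.mem_range_self i⟩

end Commutative

section Optimality

variable {X I : Type*} {q : X → I → X} {g : X → I → ℝ} {v : X → ℝ} {x : X} {a : ℕ → I} {c C : ℝ}

/-- The value `v` is constant along the play of `a` from `x`. -/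
def KeepsValue (q : X → I → X) (v : X → ℝ) (x : X) (a : ℕ → I) : Prop :=
  ∀ t, v (play q x a t) = v x

lemma KeepsValue.splice {b : ℕ → I} {T : ℕ} (ha : KeepsValue q v x a)
    (hb : KeepsValue q v (play q x a T) b) : KeepsValue q v x (splice a T b) := by
  intro t
  rcases le_total t T with h | h
  · rw [play_splice_of_le h, ha]
  · obtain ⟨s, rfl⟩ := Nat.exists_eq_add_of_le h
    rw [play_splice_add, hb, ha]

theorem exists_keepsValue_guarantees [Finite I] [RightCommutative q] (hg : ∀ x i, |g x i| ≤ C)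
    (hv : ∀ x, HasUniformValuePure q g x (v x)) (hc : c < v x) :
    ∃ a, KeepsValue q v x a ∧ Guarantees q g x a c := by
  classical
  obtain ⟨u, hu, huv, hu_lim⟩ := exists_seq_strictMono_tendsto (v x)
  choose a ha using fun n => (hv x).exists_guarantees hg (huv n)
  obtain ⟨φ, hφ⟩ := (wellQuasiOrdered_le (α := I → ℕ∞)).exists_monotone_subseq
    fun n => totalCount (a n)
  obtain ⟨k, hk⟩ := (hu_lim.eventually_const_lt hc).exists
  have hu_le (m : ℕ) : u m ≤ u (φ m) := hu.monotone φ.strictMono.le_apply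
  have hv_le := value_step_le hg hv
  refine ⟨a (φ k), fun t => le_antisymm ?_ ?_, (ha (φ k)).mono (hk.le.trans (hu_le k))⟩
  · exact apply_play_le_of_actionsBefore_le hv_le (actionsBefore_mono (a (φ k)) t.zero_le) x
  · refine le_of_tendsto hu_lim ((eventually_ge_atTop k).mono fun m hm => ?_)
    obtain ⟨t', ht'⟩ := exists_actionsBefore_le (hφ k m hm) t
    calc u m ≤ u (φ m) := hu_le m
      _ ≤ v (play q x (a (φ m)) t') := (ha (φ m)).le_value_play hg hv t'
      _ ≤ v (play q x (a (φ k)) t) := apply_play_le_of_actionsBefore_le hv_le ht' x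

variable [Finite I] [TopologicalSpace I] [DiscreteTopology I] [MeasurableSpace I] [BorelSpace I]

theorem exists_forall_lt_eventually_le_integral_payoff (hg : ∀ x i, |g x i| ≤ C)
    (hkeep : ∀ y, v y = v x → ∀ c < v y, ∃ a, KeepsValue q v y a ∧ Guarantees q g y a c) :
    ∃ μ : ProbabilityMeasure (ℕ → I), ∀ c < v x, ∀ᶠ n in atTop,
      c ≤ ∫ a, payoff q g x a n ∂(μ : Measure (ℕ → I)) := by
  let S : Set (ℕ → ℝ) := payoff q g x '' {a | KeepsValue q v x a}
  have hS₀ : S.Nonempty := by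
    obtain ⟨a, ha, -⟩ := hkeep x rfl (v x - 1) (sub_one_lt _)
    exact ⟨_, a, ha, rfl⟩
  have hb : ∀ y ∈ S, ∀ n, -C ≤ y n := by
    rintro _ ⟨a, -, rfl⟩ n
    exact (abs_le.1 (abs_payoff_le hg x a n)).1
  have hS : ∀ y ∈ S, ∀ T, ∀ c < v x,
      ∃ z ∈ S, Set.EqOn z y (Set.Iic T) ∧ ∀ᶠ n in atTop, c ≤ z n := by
    rintro _ ⟨a, ha, rfl⟩ T c hc
    obtain ⟨d, hcd, hd⟩ := exists_between hc
    obtain ⟨b, hb, hbd⟩ := hkeep (play q x a T) (ha T) d (hd.trans_eq (ha T).symm)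
    exact ⟨_, ⟨splice a T b, ha.splice hb, rfl⟩,
      fun n hn => payoff_congr fun t ht => splice_of_lt (ht.trans_le hn),
      ((guarantees_splice_iff hg T).2 hbd c hcd).mono fun n hn => hn.le⟩
  obtain ⟨y, hy, hyc⟩ := exists_mem_closedConvexHull_forall_lt_eventually_le hS₀ hb hS
  obtain ⟨μ, hμ⟩ := exists_probabilityMeasure_integral_eq (continuous_payoff x)
    ((closedConvexHull ℝ).monotone (Set.image_subset_range _ _) hy)
  exact ⟨μ, fun c hc => (hyc c hc).mono fun n hn => (hμ n).symm ▸ hn⟩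

theorem exists_zero_optimal_mixed_strategy_general (q : X → I → X) (g : X → I → ℝ)
    (hg : ∀ x i, |g x i| ≤ C) (hcomm : ∀ x i i', q (q x i) i' = q (q x i') i)
    (v : X → ℝ) (hv : ∀ x, HasUniformValuePure q g x (v x)) (x₁ : X) :
    ∃ μ : Measure (ℕ → I), IsProbabilityMeasure μ ∧
      Tendsto (fun n => ∫ a, payoff q g x₁ a n ∂μ) atTop (𝓝 (v x₁)) := by
  have : RightCommutative q := ⟨hcomm⟩
  obtain ⟨μ, hμ⟩ := exists_forall_lt_eventually_le_integral_payoff (v := v) (x := x₁) hg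
    fun y _ c hc => exists_keepsValue_guarantees hg hv hc
  refine ⟨μ, inferInstance, tendsto_order.2 ⟨fun c hc => ?_, fun c hc => ?_⟩⟩
  · obtain ⟨d, hcd, hd⟩ := exists_between hc
    exact (hμ d hd).mono fun n hn => hcd.trans_le hn
  · exact ((hv x₁).eventually_nValue_lt hg hc).mono fun n hn =>
      (integral_payoff_le_nValue hg x₁ n μ).trans_lt hn

end Optimality

/-- In a deterministic commutative MDP having a uniform value in pure strategies at every
initial state, every initial state admits a `0`-optimal mixed strategy: a Borel probability
measure `μ` on `I^ℕ` whose expected `n`-stage payoffs converge to the uniform value. -/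
theorem exists_zero_optimal_mixed_strategy
    {X I : Type*} [Fintype I] [Nonempty I]
    [TopologicalSpace I] [DiscreteTopology I] [MeasurableSpace I] [BorelSpace I]
    (q : X → I → X) (g : X → I → ℝ)
    (hg : ∀ x i, g x i ∈ Set.Icc (0 : ℝ) 1)
    (hcomm : ∀ x i i', q (q x i) i' = q (q x i') i)
    (v : X → ℝ) (hv : ∀ x, HasUniformValuePure q g x (v x))
    (x₁ : X) :
    ∃ μ : Measure (ℕ → I), IsProbabilityMeasure μ ∧
      Tendsto (fun n => ∫ a, payoff q g x₁ a n ∂μ) atTop (𝓝 (v x₁)) :=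
  exists_zero_optimal_mixed_strategy_general q g
    (fun x i => abs_le.2 ⟨neg_one_lt_zero.le.trans (hg x i).1, (hg x i).2⟩) hcomm v hv x₁
end
end

section
/- For every m ≥ 1 there exists an integer f(m) ≥ 1 such that: for every nonempty compact subset X of ℝ^m (endowed with the ℓ¹ norm ‖y‖₁ = ∑_{i=1}^m |y_i|) and every map M : X → X that is 1-Lipschitz with respect to ‖·‖₁, there exist an integer L with 1 ≤ L ≤ f(m) and maps B₀, …, B_{L−1} : X → X such that for every l ∈ {0, …, L−1} and every x ∈ X, the sequence of iterates M^{(tL + l)}(x) converges to B_l(x) as t → ∞. -/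
open Filter Topology

noncomputable section

/-!
Along an orbit of a nonexpansive map the distances `dist (M^[i + n] x) (M^[i] x)` decrease in `i`;
limits of shifted orbits therefore form a bi-infinite sequence whose distances are translation
invariant. This puts an invariant pseudometric on `ℤ`, and its completion is a compact group `G`
which, like `ℓ¹`, has finitely many functions `f i` with `dist x y = max_i (f i y - f i x)`.

An ultrametric subset of such a `G` has boundedly many points. On the other hand, as long as no
small multiple of `g : G` vanishes, ultrametric sets can be enlarged: in a suitable closed set
`E ∋ 0` choose `a` of maximal norm and continue inside `{y ∈ E | a - y ∈ E, ‖a - y‖ = ‖a‖}`, all of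
whose points have distance `‖a‖` from `a`. This set still contains small nonzero multiples of `g`,
because for points `x`, `x'` whose translates by `a` are separated by the same `f i`, the difference
`y = x' - x` satisfies `2 * ‖a‖ ≤ ‖a + y‖ + ‖a - y‖`. Hence a multiple `k • g` with `k` bounded is
zero, which means `dist (M^[i + k] x) (M^[i] x) → 0`, and the factorial of the bound is a common
period.
-/

/-- The functions `f i` norm the distance of `X`: `dist x y` is the maximum of the increments
`f i y - f i x`. For finite `ι`, the spaces with such a family are those that embed isometrically
into a finite-dimensional space with the supremum norm; increments are taken without absolute
values, so that a symmetric description needs both a function and its negative. -/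
def IsNormingFamily {ι X : Type*} [PseudoMetricSpace X] (f : ι → X → ℝ) : Prop :=
  ∀ x y, IsGreatest (Set.range fun i => f i y - f i x) (dist x y)

section NormingFamily

variable {ι X Y : Type*} [PseudoMetricSpace X] [PseudoMetricSpace Y] {f : ι → X → ℝ}

lemma IsNormingFamily.sub_le_dist (hf : IsNormingFamily f) (i : ι) (x y : X) :
    f i y - f i x ≤ dist x y :=
  (hf x y).2 ⟨i, rfl⟩

lemma IsNormingFamily.exists_sub_eq_dist (hf : IsNormingFamily f) (x y : X) :
    ∃ i, f i y - f i x = dist x y :=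
  (hf x y).1

lemma IsNormingFamily.comp_isometry (hf : IsNormingFamily f) {φ : Y → X} (hφ : Isometry φ) :
    IsNormingFamily fun i => f i ∘ φ :=
  fun x y => hφ.dist_eq x y ▸ hf (φ x) (φ y)

lemma isNormingFamily_signedSum (κ : Type*) [Fintype κ] :
    IsNormingFamily fun (s : κ → SignType) (x : PiLp 1 fun _ : κ => ℝ) => ∑ j, (s j : ℝ) * x j := by
  have mul_le_abs (s : SignType) (t : ℝ) : (s : ℝ) * t ≤ |t| := by
    cases s <;> simp [le_abs_self, neg_le_abs]
  intro x y
  simp only [← Finset.sum_sub_distrib, ← mul_sub, PiLp.dist_eq_of_L1, Real.dist_eq]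
  simp only [abs_sub_comm (x _)]
  refine ⟨⟨fun j => SignType.sign (y j - x j), by simp only [sign_mul_self]⟩, ?_⟩
  rintro _ ⟨s, rfl⟩
  exact Finset.sum_le_sum fun j _ => mul_le_abs (s j) (y j - x j)

lemma IsNormingFamily.card_le_two_pow_of_dist_lt_add [Fintype ι] [Fintype X]
    (hf : IsNormingFamily f)
    (hX : ∀ x y z : X, x ≠ y → y ≠ z → dist x z < dist x y + dist y z) :
    Fintype.card X ≤ 2 ^ Fintype.card ι := by
  classical
  let attained (x : X) : Set ι := {i | ∃ y, x ≠ y ∧ f i y - f i x = dist x y}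
  suffices Function.Injective attained by
    simpa using Fintype.card_le_of_injective attained this
  intro x y hxy
  by_contra hne
  obtain ⟨i, hi⟩ := hf.exists_sub_eq_dist x y
  have hmem : i ∈ attained y := hxy ▸ ⟨y, hne, hi⟩
  obtain ⟨z, hyz, hz⟩ := hmem
  linarith [hf.sub_le_dist i x z, hX x y z hne hyz]

end NormingFamily

lemma IsNormingFamily.card_le_two_pow_of_isUltrametricDist {ι X : Type*} [Fintype ι] [Fintype X]
    [MetricSpace X] [IsUltrametricDist X] {f : ι → X → ℝ} (hf : IsNormingFamily f) :
    Fintype.card X ≤ 2 ^ Fintype.card ι :=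
  hf.card_le_two_pow_of_dist_lt_add fun x y z hxy hyz =>
    (dist_triangle_max x y z).trans_lt <|
      max_lt (lt_add_of_pos_right _ (dist_pos.2 hyz)) (lt_add_of_pos_left _ (dist_pos.2 hxy))

lemma isUltrametricDist_insert {X : Type*} [PseudoMetricSpace X] {P : Set X} {a : X} {ρ : ℝ}
    [IsUltrametricDist P] (ha : ∀ p ∈ P, dist a p = ρ) (hP : ∀ p ∈ P, ∀ q ∈ P, dist p q ≤ ρ) :
    IsUltrametricDist (insert a P : Set X) := by
  have ha' (p) (hp : p ∈ P) : dist p a = ρ := dist_comm a p ▸ ha p hp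
  refine ⟨?_⟩
  rintro ⟨p, rfl | hp⟩ ⟨q, rfl | hq⟩ ⟨s, rfl | hs⟩ <;> simp only [Subtype.dist_eq]
  · simp
  · simp
  · simp
  · simp [ha q hq, ha s hs]
  · simp
  · simp [ha' p hp, hP p hp s hs]
  · simp [ha' p hp, ha' q hq]
  · exact dist_triangle_max (⟨p, hp⟩ : P) ⟨q, hq⟩ ⟨s, hs⟩

/-- A set containing the differences of all equally coloured pairs, for some colouring of `G` with
`r` colours. Such sets behave like neighbourhoods of `0`, with `r` measuring their smallness: they
are stable under intersection and contain one of the first `r` multiples of every element. -/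
def IsChromaticNhd {G : Type*} [AddCommGroup G] (r : ℕ) (D : Set G) : Prop :=
  ∃ κ : G → Fin r, ∀ x y, κ x = κ y → y - x ∈ D

/-- The openness notion belonging to `IsChromaticNhd`, with the same number `r` of colours at every
point of `E`; a displacement `y` counts only if both `b + y` and `b - y` stay in `E`. -/
def IsChromaticOpen {G : Type*} [AddCommGroup G] (r : ℕ) (E : Set G) : Prop :=
  ∀ b ∈ E, IsChromaticNhd r {y | b + y ∈ E ∧ b - y ∈ E}

section Chromatic

variable {G : Type*} [AddCommGroup G] {r s : ℕ} {D E F : Set G}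

lemma IsChromaticNhd.mono (hD : IsChromaticNhd r D) (hDE : D ⊆ E) : IsChromaticNhd r E :=
  hD.imp fun _ hκ x y hxy => hDE (hκ x y hxy)

lemma IsChromaticNhd.inter (hD : IsChromaticNhd r D) (hE : IsChromaticNhd s E) :
    IsChromaticNhd (r * s) (D ∩ E) := by
  obtain ⟨κ, hκ⟩ := hD
  obtain ⟨μ, hμ⟩ := hE
  refine ⟨fun x => finProdFinEquiv (κ x, μ x), fun x y hxy => ?_⟩
  obtain ⟨hκxy, hμxy⟩ := Prod.mk.inj (finProdFinEquiv.injective hxy)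
  exact ⟨hκ x y hκxy, hμ x y hμxy⟩

lemma IsChromaticNhd.exists_nsmul_mem (hD : IsChromaticNhd r D) (g : G) :
    ∃ k : ℕ, 1 ≤ k ∧ k ≤ r ∧ k • g ∈ D := by
  obtain ⟨κ, hκ⟩ := hD
  obtain ⟨i, j, hne, hij⟩ := Fintype.exists_ne_map_eq_of_card_lt
    (fun i : Fin (r + 1) => κ ((i : ℕ) • g)) (by simp)
  wlog hlt : i < j generalizing i j
  · exact this j i hne.symm hij.symm (hne.lt_or_gt.resolve_left hlt)
  have hlt' : (i : ℕ) < j := hlt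
  refine ⟨j - i, by omega, by omega, ?_⟩
  simpa only [sub_nsmul g hlt'.le, ← sub_eq_add_neg] using hκ _ _ hij

lemma isChromaticOpen_univ : IsChromaticOpen 1 (Set.univ : Set G) :=
  fun _ _ => ⟨fun _ => 0, fun _ _ _ => ⟨trivial, trivial⟩⟩

lemma IsChromaticOpen.inter (hE : IsChromaticOpen r E) (hF : IsChromaticOpen s F) :
    IsChromaticOpen (r * s) (E ∩ F) := fun b hb =>
  ((hE b hb.1).inter (hF b hb.2)).mono fun _ hy => ⟨⟨hy.1.1, hy.2.1⟩, ⟨hy.1.2, hy.2.2⟩⟩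

lemma IsChromaticOpen.preimage_const_sub (hE : IsChromaticOpen r E) (a : G) :
    IsChromaticOpen r ((a - ·) ⁻¹' E) := fun b hb =>
  (hE (a - b) hb).mono fun y hy =>
    ⟨by simpa only [Set.mem_preimage, ← sub_sub] using hy.2,
      by simpa only [Set.mem_preimage, ← sub_add] using hy.1⟩

end Chromatic

section NormedGroup

variable {ι G : Type*} [Fintype ι]

lemma IsNormingFamily.isChromaticNhd_two_mul_norm_le [SeminormedAddCommGroup G] {f : ι → G → ℝ}
    (hf : IsNormingFamily f) (b : G) :
    IsChromaticNhd (Fintype.card ι) {y | 2 * ‖b‖ ≤ ‖b + y‖ + ‖b - y‖} := by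
  choose i hi using fun x => hf.exists_sub_eq_dist x (x + b)
  refine ⟨fun x => Fintype.equivFin ι (i x), fun x y hxy => ?_⟩
  replace hxy : i x = i y := (Fintype.equivFin ι).injective hxy
  calc 2 * ‖b‖ = (f (i x) (x + b) - f (i x) x) + (f (i x) (y + b) - f (i x) y) := by
        rw [hi x, hxy, hi y, dist_self_add_right, dist_self_add_right, two_mul]
    _ = (f (i x) (y + b) - f (i x) x) + (f (i x) (x + b) - f (i x) y) := by ring
    _ ≤ dist x (y + b) + dist y (x + b) := add_le_add (hf.sub_le_dist ..) (hf.sub_le_dist ..)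
    _ = ‖b + (y - x)‖ + ‖b - (y - x)‖ := by
        rw [dist_eq_norm', dist_eq_norm']
        congr 2 <;> abel

lemma IsNormingFamily.isChromaticOpen_inter_sphere [SeminormedAddCommGroup G] {f : ι → G → ℝ}
    (hf : IsNormingFamily f) {r : ℕ} {E : Set G} (hE : IsChromaticOpen r E) {ρ : ℝ}
    (hρ : ∀ y ∈ E, ‖y‖ ≤ ρ) :
    IsChromaticOpen (r * Fintype.card ι) (E ∩ Metric.sphere 0 ρ) := by
  rintro b ⟨hbE, hb⟩
  rw [mem_sphere_zero_iff_norm] at hb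
  refine ((hE b hbE).inter (hf.isChromaticNhd_two_mul_norm_le b)).mono ?_
  rintro y ⟨⟨hadd, hsub⟩, hy : 2 * ‖b‖ ≤ ‖b + y‖ + ‖b - y‖⟩
  have hadd_le := hρ _ hadd
  have hsub_le := hρ _ hsub
  exact ⟨⟨hadd, mem_sphere_zero_iff_norm.2 (by linarith)⟩,
    ⟨hsub, mem_sphere_zero_iff_norm.2 (by linarith)⟩⟩

/-- In a compact group normed by `c` functions, a closed set `E ∋ 0` that is chromatically open with
`r` colours contains `n` points forming an ultrametric space, unless one of the first
`multipleBound c n r` multiples of a given element is zero. In the recursion, `E` is replaced by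
`E ∩ (a - ·) ⁻¹' (E ∩ Metric.sphere 0 ‖a‖)`: passing to the sphere costs a factor `c`, and
intersecting with `E` another factor `r`. -/
def multipleBound (c : ℕ) : ℕ → ℕ → ℕ
  | 0, _ => 0
  | n + 1, r => max r (multipleBound c n (r * (r * c)))

variable [NormedAddCommGroup G] [CompactSpace G] {f : ι → G → ℝ}

lemma IsNormingFamily.exists_isUltrametricDist_finset (hf : IsNormingFamily f) (g : G) (n r : ℕ)
    {E : Set G} (hE : IsClosed E) (h0 : 0 ∈ E) (hopen : IsChromaticOpen r E)
    (hg : ∀ k : ℕ, 1 ≤ k → k ≤ multipleBound (Fintype.card ι) n r → k • g ≠ 0) :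
    ∃ P : Finset G, P.card = n ∧ ↑P ⊆ E ∧ (∀ p ∈ P, ∀ q ∈ P, dist p q ∈ norm '' E) ∧
      IsUltrametricDist (P : Set G) := by
  classical
  induction n generalizing r E with
  | zero => exact ⟨∅, rfl, by simp, by simp, ⟨by simp⟩⟩
  | succ n ih =>
    obtain ⟨a, haE, hmax : ∀ y ∈ E, ‖y‖ ≤ ‖a‖⟩ :=
      hE.isCompact.exists_isMaxOn ⟨0, h0⟩ continuous_norm.continuousOn
    have ha_pos : 0 < ‖a‖ := by
      obtain ⟨k, hk, hkr, hkE, -⟩ := (hopen 0 h0).exists_nsmul_mem g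
      rw [zero_add] at hkE
      exact (norm_pos_iff.2 (hg k hk (hkr.trans (le_max_left _ _)))).trans_le (hmax _ hkE)
    let A : Set G := E ∩ Metric.sphere 0 ‖a‖
    have hA : IsClosed A := hE.inter Metric.isClosed_sphere
    obtain ⟨P, hcard, hPE', hdist, hultra⟩ := ih _
      (hE.inter (hA.preimage (continuous_const.sub continuous_id)) :
        IsClosed (E ∩ (a - ·) ⁻¹' A))
      ⟨h0, by simpa [A] using haE⟩
      (hopen.inter ((hf.isChromaticOpen_inter_sphere hopen hmax).preimage_const_sub a))
      fun k hk hkn => hg k hk (hkn.trans (le_max_right _ _))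
    have hPE : ↑P ⊆ E := hPE'.trans Set.inter_subset_left
    replace hdist (p) (hp : p ∈ P) (q) (hq : q ∈ P) : dist p q ∈ norm '' E :=
      Set.image_mono Set.inter_subset_left (hdist p hp q hq)
    have ha_dist (p) (hp : p ∈ P) : dist a p = ‖a‖ := by
      simpa [dist_eq_norm] using (hPE' hp).2.2
    have ha_mem : ‖a‖ ∈ norm '' E := ⟨a, haE, rfl⟩
    have haP : a ∉ P := fun h => ha_pos.ne (by simpa using ha_dist a h)
    refine ⟨insert a P, by rw [Finset.card_insert_of_notMem haP, hcard], ?_, ?_, ?_⟩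
    · simpa [Set.insert_subset_iff] using ⟨haE, hPE⟩
    · intro p hp q hq
      rcases Finset.mem_insert.1 hp with hpa | hp <;> rcases Finset.mem_insert.1 hq with hqa | hq
      · exact ⟨0, h0, by simp [hpa, hqa]⟩
      · rwa [hpa, ha_dist q hq]
      · rwa [hqa, dist_comm, ha_dist p hp]
      · exact hdist p hp q hq
    · rw [Finset.coe_insert]
      refine isUltrametricDist_insert ha_dist fun p hp q hq => ?_
      obtain ⟨y, hy, hpq⟩ := hdist p hp q hq
      exact hpq ▸ hmax y hy

/-- A bound for the orders of the elements of a compact group normed by `c` functions: the multiples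
needed for an ultrametric subset with more than the possible `2 ^ c` points. -/
def orderBound (c : ℕ) : ℕ :=
  multipleBound c (2 ^ c + 1) 1

lemma IsNormingFamily.exists_nsmul_eq_zero (hf : IsNormingFamily f) (g : G) :
    ∃ k : ℕ, 1 ≤ k ∧ k ≤ orderBound (Fintype.card ι) ∧ k • g = 0 := by
  by_contra! hg
  obtain ⟨P, hcard, -, -, hP⟩ := hf.exists_isUltrametricDist_finset g (2 ^ Fintype.card ι + 1) 1
    isClosed_univ (Set.mem_univ 0) isChromaticOpen_univ hg
  have hle := (hf.comp_isometry (φ := ((↑) : ↥(P : Set G) → G))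
    isometry_subtype_coe).card_le_two_pow_of_isUltrametricDist
  simp [hcard] at hle

end NormedGroup

section InvariantDistance

variable {ι H X : Type*} [Fintype ι] [MetricSpace X] [CompactSpace X] {f : ι → X → ℝ}

lemma IsNormingFamily.exists_norm_nsmul_eq_zero [SeminormedAddCommGroup H]
    (hf : IsNormingFamily f) {F : H → X} (hF : Isometry F) (g : H) :
    ∃ k : ℕ, 1 ≤ k ∧ k ≤ orderBound (Fintype.card ι) ∧ ‖k • g‖ = 0 := by
  have hext : Isometry (UniformSpace.Completion.extension F) := hF.completion_extension
  have : CompactSpace (UniformSpace.Completion H) := hext.isClosedEmbedding.compactSpace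
  obtain ⟨k, hk, hkN, hkg⟩ :=
    (hf.comp_isometry hext).exists_nsmul_eq_zero (g : UniformSpace.Completion H)
  have hcoe : ((k • g : H) : UniformSpace.Completion H) = 0 :=
    (map_nsmul (UniformSpace.Completion.toCompl (α := H)) k g).trans hkg
  exact ⟨k, hk, hkN, by rw [← UniformSpace.Completion.norm_coe, hcoe, norm_zero]⟩

lemma IsNormingFamily.exists_apply_nsmul_eq [AddCommGroup H] (hf : IsNormingFamily f) {F : H → X}
    (hF : ∀ x y z, dist (F (z + x)) (F (z + y)) = dist (F x) (F y)) (g : H) :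
    ∃ k : ℕ, 1 ≤ k ∧ k ≤ orderBound (Fintype.card ι) ∧ F 0 = F (k • g) := by
  let _ : PseudoMetricSpace H := .induced F inferInstance
  let _ : Norm H := ⟨fun x => dist 0 x⟩
  let _ : SeminormedAddCommGroup H := .ofAddDist (fun _ => rfl) fun x y z => (hF x y z).ge
  obtain ⟨k, hk, hkN, hkg⟩ :=
    hf.exists_norm_nsmul_eq_zero (Isometry.of_dist_eq fun _ _ => rfl : Isometry F) g
  exact ⟨k, hk, hkN, dist_eq_zero.1 hkg⟩

end InvariantDistance

section Sequence

variable {X : Type*} [PseudoMetricSpace X] {u : ℕ → X}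

lemma exists_biinfinite_limit [CompactSpace X] {d : ℕ → ℝ}
    (hd : ∀ n, Tendsto (fun i => dist (u (i + n)) (u i)) atTop (𝓝 (d n))) :
    ∃ F : ℤ → X, ∀ (j : ℤ) (n : ℕ), dist (F (j + n)) (F j) = d n := by
  let U : Ultrafilter ℕ := hyperfilter ℕ
  have hU : (U : Filter ℕ) ≤ atTop := Nat.hyperfilter_le_atTop
  have hlim (k : ℤ) : ∃ y, Tendsto (fun i : ℕ => u (i + k).toNat) U (𝓝 y) := by
    obtain ⟨y, -, hy⟩ := isCompact_univ.ultrafilter_le_nhds (U.map fun i : ℕ => u (i + k).toNat)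
      (by simp)
    exact ⟨y, hy⟩
  choose F hF using hlim
  refine ⟨F, fun j n => tendsto_nhds_unique ((hF (j + n)).dist (hF j)) ?_⟩
  have hshift : Tendsto (fun i : ℕ => (i + j).toNat) atTop atTop :=
    tendsto_atTop.2 fun b => (eventually_ge_atTop (b + j.natAbs)).mono fun i hi => by omega
  refine (((hd n).comp hshift).congr' ?_).mono_left hU
  filter_upwards [eventually_ge_atTop j.natAbs] with i hi
  have htoNat : ((i : ℤ) + (j + n)).toNat = ((i : ℤ) + j).toNat + n := by omega
  simp only [Function.comp_apply, htoNat]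

lemma dist_add_left_of_dist_add_natCast {F : ℤ → X} {d : ℕ → ℝ}
    (hF : ∀ (j : ℤ) (n : ℕ), dist (F (j + n)) (F j) = d n) (i j k : ℤ) :
    dist (F (k + i)) (F (k + j)) = dist (F i) (F j) := by
  wlog hji : j ≤ i generalizing i j
  · rw [dist_comm, this j i (le_of_not_ge hji), dist_comm]
  obtain ⟨n, rfl⟩ := Int.le.dest hji
  rw [← add_assoc, hF, hF]

lemma tendsto_dist_add_of_dvd {k L : ℕ} (hkL : k ∣ L)
    (hk : Tendsto (fun i => dist (u (i + k)) (u i)) atTop (𝓝 0)) :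
    Tendsto (fun i => dist (u (i + L)) (u i)) atTop (𝓝 0) := by
  obtain ⟨n, rfl⟩ := hkL
  induction n with
  | zero => simp
  | succ n ih =>
    have hsum := (hk.comp (tendsto_add_atTop_nat (k * n))).add ih
    rw [add_zero] at hsum
    refine squeeze_zero (fun _ => dist_nonneg) (fun i => ?_) hsum
    simpa only [Function.comp_apply, mul_add_one, ← add_assoc]
      using dist_triangle _ (u (i + k * n)) _

end Sequence

section Nonexpansive

lemma antitone_dist_iterate {X : Type*} [PseudoMetricSpace X] {M : X → X} (hM : LipschitzWith 1 M)
    (x y : X) : Antitone fun i => dist (M^[i] x) (M^[i] y) := by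
  refine antitone_nat_of_succ_le fun i => ?_
  simpa only [Function.iterate_succ_apply', NNReal.coe_one, one_mul]
    using hM.dist_le_mul (M^[i] x) (M^[i] y)

lemma exists_tendsto_dist_iterate_add {X : Type*} [PseudoMetricSpace X] {M : X → X}
    (hM : LipschitzWith 1 M) (x : X) (n : ℕ) :
    ∃ d, Tendsto (fun i => dist (M^[i + n] x) (M^[i] x)) atTop (𝓝 d) := by
  simp only [Function.iterate_add_apply]
  exact ⟨_, tendsto_atTop_ciInf (antitone_dist_iterate hM _ _)
    ⟨0, Set.forall_mem_range.2 fun _ => dist_nonneg⟩⟩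

variable {X : Type*} [MetricSpace X] {M : X → X} {K : Set X} {x : X}

lemma IsNormingFamily.exists_tendsto_dist_iterate_add_zero {ι : Type*} [Fintype ι]
    {f : ι → X → ℝ} (hf : IsNormingFamily f) (hM : LipschitzWith 1 M) (hK : IsCompact K)
    (hx : ∀ n, M^[n] x ∈ K) :
    ∃ k : ℕ, 1 ≤ k ∧ k ≤ orderBound (Fintype.card ι) ∧
      Tendsto (fun i => dist (M^[i + k] x) (M^[i] x)) atTop (𝓝 0) := by
  have : CompactSpace K := isCompact_iff_compactSpace.1 hK
  choose d hd using exists_tendsto_dist_iterate_add hM x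
  obtain ⟨F, hF⟩ := exists_biinfinite_limit (u := fun n => (⟨M^[n] x, hx n⟩ : K)) hd
  obtain ⟨k, hk, hkN, hFk⟩ := (hf.comp_isometry isometry_subtype_coe).exists_apply_nsmul_eq (F := F)
    (dist_add_left_of_dist_add_natCast hF) 1
  have hdk : d k = 0 := by
    rw [← hF 0 k, dist_comm, dist_eq_zero]
    simpa using hFk
  exact ⟨k, hk, hkN, hdk ▸ hd k⟩

lemma exists_tendsto_iterate_of_tendsto_dist_succ (hM : LipschitzWith 1 M) (hK : IsCompact K)
    (hx : ∀ n, M^[n] x ∈ K)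
    (hreg : Tendsto (fun n => dist (M^[n + 1] x) (M^[n] x)) atTop (𝓝 0)) :
    ∃ y, Tendsto (fun n => M^[n] x) atTop (𝓝 y) := by
  obtain ⟨y, -, φ, hφ, hy⟩ := hK.tendsto_subseq hx
  have hfix : M y = y := by
    refine dist_eq_zero.1 (tendsto_nhds_unique (((hM.continuous.tendsto y).comp hy).dist hy) ?_)
    simpa only [Function.comp_def, Function.iterate_succ_apply'] using hreg.comp hφ.tendsto_atTop
  have hanti : Antitone fun n => dist (M^[n] x) y := by
    simpa only [Function.iterate_fixed hfix] using antitone_dist_iterate hM x y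
  exact ⟨y, tendsto_iff_dist_tendsto_zero.2 <|
    (tendsto_iff_tendsto_subseq_of_antitone hanti hφ.tendsto_atTop).2 <|
      tendsto_iff_dist_tendsto_zero.1 hy⟩

lemma exists_tendsto_iterate_mul_add (hM : LipschitzWith 1 M) (hK : IsCompact K)
    (hx : ∀ n, M^[n] x ∈ K) {L : ℕ} (hL : 1 ≤ L)
    (hreg : Tendsto (fun i => dist (M^[i + L] x) (M^[i] x)) atTop (𝓝 0)) (l : ℕ) :
    ∃ y, Tendsto (fun t : ℕ => M^[t * L + l] x) atTop (𝓝 y) := by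
  have hiter (t : ℕ) : M^[t * L + l] x = (M^[L])^[t] (M^[l] x) := by
    rw [Function.iterate_add_apply, mul_comm, Function.iterate_mul]
  have hindex : Tendsto (fun t => t * L + l) atTop atTop :=
    (tendsto_add_atTop_nat l).comp (tendsto_id.atTop_mul_const' hL)
  have hML : LipschitzWith 1 M^[L] := by simpa only [one_pow] using hM.iterate L
  simp only [hiter]
  refine exists_tendsto_iterate_of_tendsto_dist_succ hML hK (fun t => hiter t ▸ hx _) ?_
  simpa only [Function.comp_def, add_right_comm _ l, ← add_one_mul, hiter] using hreg.comp hindex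

end Nonexpansive

theorem exists_uniform_period_for_one_lipschitz_maps_general (ι : Type*) [Finite ι] :
    ∃ L : ℕ, 1 ≤ L ∧ ∀ (X : Type*) [MetricSpace X] (f : ι → X → ℝ), IsNormingFamily f →
      ∀ M : X → X, LipschitzWith 1 M → ∀ K : Set X, IsCompact K →
        ∀ x, (∀ n, M^[n] x ∈ K) → ∀ l : ℕ,
          ∃ y, Tendsto (fun t : ℕ => M^[t * L + l] x) atTop (𝓝 y) := by
  have := Fintype.ofFinite ι
  refine ⟨(orderBound (Fintype.card ι)).factorial, Nat.factorial_pos _, ?_⟩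
  intro X _ f hf M hM K hK x hx l
  obtain ⟨k, hk, hkN, hlim⟩ := hf.exists_tendsto_dist_iterate_add_zero hM hK hx
  have hlim_period := tendsto_dist_add_of_dvd (u := (M^[·] x)) (Nat.dvd_factorial hk hkN) hlim
  exact exists_tendsto_iterate_mul_add hM hK hx (Nat.factorial_pos _) hlim_period l

/-- For every `m ≥ 1` there is an integer `f(m) ≥ 1` such that for every nonempty compact subset
`X` of `ℝ^m` with the `ℓ¹` norm and every `1`-Lipschitz map `M : X → X`, there exist `L ≤ f(m)`
and maps `B₀, …, B_{L-1}` with `M^{tL + l} x → B_l x` as `t → ∞`, for every `l < L` and `x`. -/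
theorem exists_uniform_period_for_one_lipschitz_maps (m : ℕ) (hm : 1 ≤ m) :
    ∃ f : ℕ, 1 ≤ f ∧
      ∀ (X : Set (PiLp 1 fun _ : Fin m => ℝ)), X.Nonempty → IsCompact X →
        ∀ M : X → X, LipschitzWith 1 M →
          ∃ L : ℕ, 1 ≤ L ∧ L ≤ f ∧
            ∃ B : ℕ → X → X, ∀ l < L, ∀ x : X,
              Tendsto (fun t : ℕ => M^[t * L + l] x) atTop (𝓝 (B l x)) := by
  obtain ⟨L, hL, hconv⟩ := exists_uniform_period_for_one_lipschitz_maps_general (Fin m → SignType)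
  refine ⟨L, hL, fun X _ hX M hM => ⟨L, hL, le_rfl, ?_⟩⟩
  choose B hB using fun l x => hconv X _
    ((isNormingFamily_signedSum (Fin m)).comp_isometry isometry_subtype_coe) M hM Set.univ
    (isCompact_iff_isCompact_univ.1 hX) x (fun _ => Set.mem_univ _) l
  exact ⟨B, fun l _ x => hB l x⟩
end
end

section
/- Let X, A and (Q_a)_{a ∈ A} be a commuting 1-Lipschitz family on a compact subset of ℝ^m with the ℓ¹ norm. For every x ∈ X, every a₀ ∈ A that is not cyclic at x, and every ε > 0, there exist an integer n and a finite set S ⊆ X such that: for every t ≥ n there exists x' ∈ S with ‖Q_{a₀}^{(t)}(x) − x'‖₁ ≤ ε; and every x' ∈ S satisfies C(x) ∪ {a₀} ⊆ C(x'), so in particular card C(x') ≥ card C(x) + 1. -/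
open Filter Topology

noncomputable section

/-- `a` is cyclic at `x` for the family `Q`: some positive iterate of `Q a` fixes `x`. -/
def Cyclic {X A : Type*} (Q : A → X → X) (a : A) (x : X) : Prop :=
  ∃ d : ℕ, 1 ≤ d ∧ (Q a)^[d] x = x

/-- The set of elements of `A` that are cyclic at `x`. -/
def cyclicSet {X A : Type*} (Q : A → X → X) (x : X) : Set A :=
  {a : A | Cyclic Q a x}

/-- `y` is reachable from `x`: `y` is obtained from `x` by applying finitely many of the maps. -/
def Reachable {X A : Type*} (Q : A → X → X) (x y : X) : Prop :=
  ∃ l : List A, y = l.foldr (fun a z => Q a z) x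

/-!
For a nonexpansive `f`, the distance from `f^[t] x` to `f^[t + k] x` decreases to a limit `ρ k`, and
`dist (f^[i] y) (f^[i + k] y) = ρ k` for all `i` at every limit point `y` of the orbit. The `ℓ¹`
distance from `u` to `v` is the largest increment of finitely many functionals `v ↦ ∑ i, ± v i`. So
all `k`-fold steps on the orbit of `y` have the same length `ρ k`, each realised by one of these
functionals, which we call its colour.

If `ρ` were positive off `0`, colouring pairs of times would yield arbitrarily long lists of steps
along which the subadditive function `ρ` is additive. Once such a list has as many entries as there
are colours, two of its partial sums share a colour (that of the step from there by the total sum),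
and the stretch between them can be appended again without losing additivity. Hence `ρ` would be
unbounded, although the orbit is not. So `ρ d = 0` for some `d > 0`, and the orbit of `x` is
asymptotic to the orbit of a `d`-periodic point `z`. As the limit of the points `f^[n * d] x`, the
point `z` inherits the periods of `x` under all continuous maps commuting with `f`.
-/

/-- The family `φ` of functionals realises the distance: `dist u v` is the largest of the increments
`φ θ v - φ θ u`. For a finite family this encodes an isometric embedding into a finite-dimensional
`ℓ^∞` space; every polyhedral norm has such a family. -/
def RealizesDist {Θ α : Type*} [PseudoMetricSpace α] (φ : Θ → α → ℝ) : Prop :=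
  ∀ u v, IsGreatest (Set.range fun θ ↦ φ θ v - φ θ u) (dist u v)

theorem RealizesDist.comp_isometry {Θ α β : Type*} [PseudoMetricSpace α] [PseudoMetricSpace β]
    {φ : Θ → β → ℝ} (hφ : RealizesDist φ) {e : α → β} (he : Isometry e) :
    RealizesDist fun θ v ↦ φ θ (e v) :=
  fun u v ↦ he.dist_eq u v ▸ hφ (e u) (e v)

/-- The functional `v ↦ ∑ i, s i * v i` on `ℓ¹` with coefficients in `{-1, 0, 1}`; these functionals
realise the `ℓ¹` distance. -/
def signSum {ι : Type*} [Fintype ι] (s : ι → SignType) (v : PiLp 1 fun _ : ι ↦ ℝ) : ℝ :=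
  ∑ i, (s i : ℝ) * v i

theorem signSum_sub_signSum {ι : Type*} [Fintype ι] (s : ι → SignType)
    (u v : PiLp 1 fun _ : ι ↦ ℝ) : signSum s v - signSum s u = ∑ i, (s i : ℝ) * (v i - u i) := by
  simp only [signSum, mul_sub, Finset.sum_sub_distrib]

theorem realizesDist_signSum {ι : Type*} [Fintype ι] :
    RealizesDist (signSum : (ι → SignType) → (PiLp 1 fun _ : ι ↦ ℝ) → ℝ) := by
  intro u v
  have hdist : dist u v = ∑ i, |v i - u i| := by
    simp only [dist_comm u v, PiLp.dist_eq_of_L1, Real.dist_eq]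
  rw [hdist]
  constructor
  · refine ⟨fun i ↦ SignType.sign (v i - u i), ?_⟩
    simp only [signSum_sub_signSum, sign_mul_self]
  · rintro _ ⟨s, rfl⟩
    simp only [signSum_sub_signSum]
    have sign_mul_le_abs (σ : SignType) (a : ℝ) : (σ : ℝ) * a ≤ |a| := by
      cases σ <;> simp [le_abs_self, neg_le_abs]
    exact Finset.sum_le_sum fun i _ ↦ sign_mul_le_abs (s i) _

/-- `ρ k` is the largest increment over a step `k` of the functions `φ θ`, whatever the starting
point of the step. -/
def IsMaxIncrement {Θ M : Type*} [Add M] (φ : Θ → M → ℝ) (ρ : M → ℝ) : Prop :=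
  ∀ i k, IsGreatest (Set.range fun θ ↦ φ θ (i + k) - φ θ i) (ρ k)

/-- `ρ` is additive along the list `L` of steps; for a length function `ρ`, the steps of `L` then
trace out a geodesic. -/
def IsAdditiveAlong {M : Type*} [AddMonoid M] (ρ : M → ℝ) (L : List M) : Prop :=
  ρ L.sum = (L.map ρ).sum

theorem exists_rel_succ_of_forall_lt_exists_rel {Θ α : Type*} [Finite Θ] (r : Θ → α → α → Prop)
    (f : ℕ → α) (hr : ∀ m n, m < n → ∃ θ, r θ (f m) (f n)) :
    ∃ (θ : Θ) (g : ℕ ↪o ℕ), ∀ n, r θ (f (g n)) (f (g (n + 1))) := by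
  classical
  have := Fintype.ofFinite Θ
  suffices h : ∀ (s : Finset Θ) (f : ℕ → α), (∀ m n, m < n → ∃ θ ∈ s, r θ (f m) (f n)) →
      ∃ (θ : Θ) (g : ℕ ↪o ℕ), ∀ n, r θ (f (g n)) (f (g (n + 1))) from
    h Finset.univ f (by simpa only [Finset.mem_univ, true_and] using hr)
  intro s
  induction s using Finset.induction_on with
  | empty =>
    intro f hf
    obtain ⟨θ, hθ, -⟩ := hf 0 1 one_pos
    exact absurd hθ (Finset.notMem_empty θ)
  | insert θ s _ ih =>
    intro f hf
    obtain ⟨g, hsucc | hnone⟩ := exists_increasing_or_nonincreasing_subseq' (r θ) f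
    · exact ⟨θ, g, hsucc⟩
    · obtain ⟨θ', g', h⟩ := ih (f ∘ g) fun m n hmn ↦ by
        obtain ⟨θ', hθ', h⟩ := hf (g m) (g n) (g.strictMono hmn)
        rcases Finset.mem_insert.1 hθ' with rfl | hs
        · exact absurd h (hnone m n hmn)
        · exact ⟨θ', hs, h⟩
      exact ⟨θ', g'.trans g, h⟩

namespace IsMaxIncrement

section AddCommMonoid

variable {Θ M : Type*} [AddCommMonoid M] {φ : Θ → M → ℝ} {ρ : M → ℝ}

theorem increment_le (h : IsMaxIncrement φ ρ) (θ : Θ) (i k : M) : φ θ (i + k) - φ θ i ≤ ρ k :=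
  (h i k).2 ⟨θ, rfl⟩

theorem exists_increment_eq (h : IsMaxIncrement φ ρ) (i k : M) :
    ∃ θ, φ θ (i + k) - φ θ i = ρ k :=
  (h i k).1

theorem map_zero (h : IsMaxIncrement φ ρ) : ρ 0 = 0 := by
  obtain ⟨θ, hθ⟩ := h.exists_increment_eq 0 0
  simpa using hθ.symm

theorem map_add_le (h : IsMaxIncrement φ ρ) (a b : M) : ρ (a + b) ≤ ρ a + ρ b := by
  obtain ⟨θ, hθ⟩ := h.exists_increment_eq 0 (a + b)
  have ha := h.increment_le θ 0 a
  have hb := h.increment_le θ (0 + a) b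
  rw [add_assoc] at hb
  linarith

theorem map_list_sum_le (h : IsMaxIncrement φ ρ) (L : List M) : ρ L.sum ≤ (L.map ρ).sum :=
  L.le_sum_of_subadditive ρ h.map_zero.le h.map_add_le

theorem isAdditiveAlong_of_le (h : IsMaxIncrement φ ρ) {L : List M}
    (hL : (L.map ρ).sum ≤ ρ L.sum) : IsAdditiveAlong ρ L :=
  (h.map_list_sum_le L).antisymm hL

theorem isAdditiveAlong_append_infix (h : IsMaxIncrement φ ρ) {a w b : List M}
    (hL : IsAdditiveAlong ρ (a ++ w ++ b)) {θ : Θ}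
    (hstart : φ θ (a.sum + (a ++ w ++ b).sum) - φ θ a.sum = ρ (a ++ w ++ b).sum)
    (hend : φ θ ((a ++ w).sum + (a ++ w ++ b).sum) - φ θ (a ++ w).sum = ρ (a ++ w ++ b).sum) :
    IsAdditiveAlong ρ (a ++ w ++ b ++ w) := by
  refine h.isAdditiveAlong_of_le ?_
  simp only [IsAdditiveAlong, List.map_append, List.sum_append] at hL hstart hend ⊢
  -- From the end of `w` the steps `b` and `a` lead to `a.sum + (a ++ w ++ b).sum`, so `hstart` and
  -- additivity force `φ θ` to grow by the full length of `w` along `w`.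
  have increment_w : (w.map ρ).sum ≤ φ θ (a.sum + w.sum) - φ θ a.sum := by
    have hba := h.increment_le θ (a.sum + w.sum) (b.sum + a.sum)
    rw [show a.sum + w.sum + (b.sum + a.sum) = a.sum + (a.sum + w.sum + b.sum) by abel] at hba
    linarith [h.map_add_le b.sum a.sum, h.map_list_sum_le a, h.map_list_sum_le b]
  have htotal := h.increment_le θ a.sum (a.sum + w.sum + b.sum + w.sum)
  rw [show a.sum + (a.sum + w.sum + b.sum + w.sum) = a.sum + w.sum + (a.sum + w.sum + b.sum) by
    abel] at htotal
  linarith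

theorem exists_isAdditiveAlong_append (h : IsMaxIncrement φ ρ) [Fintype Θ] {L : List M}
    (hL : IsAdditiveAlong ρ L) (hlen : Fintype.card Θ ≤ L.length) :
    ∃ w, w ≠ [] ∧ w ⊆ L ∧ IsAdditiveAlong ρ (L ++ w) := by
  choose colour hcolour using fun i ↦ h.exists_increment_eq i L.sum
  obtain ⟨i, j, hij, hsame⟩ : ∃ i j : Fin (L.length + 1), i < j ∧
      colour (L.take i).sum = colour (L.take j).sum := by
    obtain ⟨i, j, hne, hsame⟩ := Fintype.exists_ne_map_eq_of_card_lt
      (fun i : Fin (L.length + 1) ↦ colour (L.take i).sum)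
      (by rw [Fintype.card_fin]; exact Nat.lt_succ_of_le hlen)
    rcases hne.lt_or_gt with hlt | hgt
    · exact ⟨i, j, hlt, hsame⟩
    · exact ⟨j, i, hgt, hsame.symm⟩
  have hprefix : L.take i ++ (L.take j).drop i = L.take j := by
    have := List.take_append_drop i (L.take j)
    rwa [List.take_take, min_eq_left (Fin.val_fin_le.2 hij.le)] at this
  have hsplit : L.take i ++ (L.take j).drop i ++ L.drop j = L := by
    rw [hprefix, List.take_append_drop]
  refine ⟨(L.take j).drop i, ?_, ?_, ?_⟩
  · rw [← List.length_pos_iff, List.length_drop, List.length_take]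
    omega
  · exact List.Subset.trans (List.drop_subset _ _) (List.take_subset _ _)
  · have := h.isAdditiveAlong_append_infix (θ := colour (L.take i).sum) (hsplit.symm ▸ hL)
      (by rw [hsplit]; exact hcolour _)
      (by rw [hsplit, hprefix, hsame]; exact hcolour _)
    rwa [hsplit] at this

theorem exists_isAdditiveAlong_length_ge (h : IsMaxIncrement φ ρ) [Fintype Θ] {L : List M}
    (hL : IsAdditiveAlong ρ L) (hlen : Fintype.card Θ ≤ L.length) (n : ℕ) :
    ∃ L', L' ⊆ L ∧ n ≤ L'.length ∧ IsAdditiveAlong ρ L' := by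
  suffices ∃ L', L' ⊆ L ∧ L.length + n ≤ L'.length ∧ IsAdditiveAlong ρ L' by
    obtain ⟨L', hsub, hn, hL'⟩ := this
    exact ⟨L', hsub, by omega, hL'⟩
  induction n with
  | zero => exact ⟨L, List.Subset.refl L, le_rfl, hL⟩
  | succ n ih =>
    obtain ⟨L', hsub, hn, hL'⟩ := ih
    obtain ⟨w, hw, hwsub, hadd⟩ := h.exists_isAdditiveAlong_append hL' (by omega)
    refine ⟨L' ++ w, List.append_subset.2 ⟨hsub, List.Subset.trans hwsub hsub⟩, ?_, hadd⟩
    have := List.length_pos_iff.2 hw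
    rw [List.length_append]
    omega

theorem not_bddAbove_range_of_isAdditiveAlong (h : IsMaxIncrement φ ρ) [Fintype Θ] {L : List M}
    (hL : IsAdditiveAlong ρ L) (hlen : Fintype.card Θ ≤ L.length) (hpos : ∀ a ∈ L, 0 < ρ a) :
    ¬ BddAbove (Set.range ρ) := by
  rintro ⟨B, hB⟩
  obtain ⟨θ, -⟩ := h.exists_increment_eq 0 0
  have hne : L ≠ [] := List.length_pos_iff.1 ((Fintype.card_pos_iff.2 ⟨θ⟩).trans_le hlen)
  obtain ⟨a, ha, hmin⟩ := Set.exists_min_image {a | a ∈ L} ρ L.finite_toSet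
    (List.exists_mem_of_ne_nil L hne)
  obtain ⟨n, hn⟩ := exists_nat_gt (B / ρ a)
  obtain ⟨L', hsub, hn', hL'⟩ := h.exists_isAdditiveAlong_length_ge hL hlen n
  have : L'.length * ρ a ≤ B :=
    calc L'.length * ρ a ≤ (L'.map ρ).sum := by
          simpa using List.card_nsmul_le_sum (L'.map ρ) (ρ a)
            (List.forall_mem_map.2 fun b hb ↦ hmin b (hsub hb))
      _ = ρ L'.sum := hL'.symm
      _ ≤ B := hB ⟨_, rfl⟩
  have hlt : B < n * ρ a := (div_lt_iff₀ (hpos a ha)).1 hn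
  have hle : (n : ℝ) * ρ a ≤ L'.length * ρ a := by gcongr; exact (hpos a ha).le
  linarith

end AddCommMonoid

section Nat

variable {Θ : Type*} [Finite Θ] {φ : Θ → ℕ → ℝ} {ρ : ℕ → ℝ}

theorem exists_isAdditiveAlong_length_eq (h : IsMaxIncrement φ ρ) (n : ℕ) :
    ∃ L : List ℕ, L.length = n ∧ (∀ a ∈ L, 0 < a) ∧ IsAdditiveAlong ρ L := by
  obtain ⟨θ, g, hstep⟩ : ∃ (θ : Θ) (g : ℕ ↪o ℕ), ∀ i,
      φ θ (g (i + 1)) - φ θ (g i) = ρ (g (i + 1) - g i) := by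
    refine exists_rel_succ_of_forall_lt_exists_rel
      (fun θ i j ↦ φ θ j - φ θ i = ρ (j - i)) id fun i j hij ↦ ?_
    obtain ⟨θ, hθ⟩ := h.exists_increment_eq i (j - i)
    exact ⟨θ, by rwa [Nat.add_sub_cancel' hij.le] at hθ⟩
  have hsum : ((List.range n).map fun i ↦ g (i + 1) - g i).sum = g n - g 0 :=
    Finset.sum_range_tsub g.monotone n
  have hsumρ : ((List.range n).map fun i ↦ ρ (g (i + 1) - g i)).sum = φ θ (g n) - φ θ (g 0) := by
    simp only [← hstep]
    exact Finset.sum_range_sub (fun i ↦ φ θ (g i)) n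
  refine ⟨(List.range n).map fun i ↦ g (i + 1) - g i, by simp, ?_, h.isAdditiveAlong_of_le ?_⟩
  · exact List.forall_mem_map.2 fun i _ ↦ Nat.sub_pos_of_lt (g.strictMono i.lt_succ_self)
  · have hθ := h.increment_le θ (g 0) (g n - g 0)
    rw [Nat.add_sub_cancel' (g.monotone n.zero_le)] at hθ
    rwa [hsum, List.map_map, Function.comp_def, hsumρ]

theorem exists_pos_map_nonpos (h : IsMaxIncrement φ ρ) (hbdd : BddAbove (Set.range ρ)) :
    ∃ k, 0 < k ∧ ρ k ≤ 0 := by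
  by_contra! hpos
  have := Fintype.ofFinite Θ
  obtain ⟨L, hlen, hL, hadd⟩ := h.exists_isAdditiveAlong_length_eq (Fintype.card Θ)
  exact h.not_bddAbove_range_of_isAdditiveAlong hadd hlen.ge (fun a ha ↦ hpos a (hL a ha)) hbdd

end Nat

end IsMaxIncrement

section Nonexpansive

variable {α : Type*} [PseudoMetricSpace α] {f : α → α}

theorem antitone_dist_iterate_s6 (hf : LipschitzWith 1 f) (x y : α) :
    Antitone fun t ↦ dist (f^[t] x) (f^[t] y) := by
  refine antitone_nat_of_succ_le fun t ↦ ?_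
  simpa only [Function.iterate_succ_apply', NNReal.coe_one, one_mul]
    using hf.dist_le_mul (f^[t] x) (f^[t] y)

theorem exists_tendsto_dist_iterate (hf : LipschitzWith 1 f) (x y : α) :
    ∃ l, Tendsto (fun t ↦ dist (f^[t] x) (f^[t] y)) atTop (𝓝 l) :=
  ⟨_, tendsto_atTop_ciInf (antitone_dist_iterate_s6 hf x y) ⟨0, by rintro _ ⟨t, rfl⟩; positivity⟩⟩

theorem dist_iterate_eq_of_tendsto_subseq (hf : Continuous f) {x y : α} {τ : ℕ → ℕ}
    (hτ : Tendsto τ atTop atTop) (hy : Tendsto (fun n ↦ f^[τ n] x) atTop (𝓝 y))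
    {k : ℕ} {l : ℝ}
    (hl : Tendsto (fun t ↦ dist (f^[t] x) (f^[t] (f^[k] x))) atTop (𝓝 l)) (i : ℕ) :
    dist (f^[i] y) (f^[i + k] y) = l := by
  have hshift (j : ℕ) : Tendsto (fun n ↦ f^[j + τ n] x) atTop (𝓝 (f^[j] y)) := by
    simp only [Function.iterate_add_apply f j]
    exact ((hf.iterate j).tendsto y).comp hy
  refine tendsto_nhds_unique ((hshift i).dist (hshift (i + k))) ?_
  have hiτ : Tendsto (fun n ↦ i + τ n) atTop atTop :=
    tendsto_atTop_mono (fun n ↦ Nat.le_add_left (τ n) i) hτ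
  refine (hl.comp hiτ).congr fun n ↦ ?_
  rw [Function.comp_apply, ← Function.iterate_add_apply, add_right_comm]

theorem exists_pos_tendsto_dist_iterate_iterate {Θ : Type*} [Finite Θ] {φ : Θ → α → ℝ}
    (hφ : RealizesDist φ) (hf : LipschitzWith 1 f) {K : Set α} (hK : IsCompact K) {x : α}
    (hx : ∀ t, f^[t] x ∈ K) :
    ∃ d, 0 < d ∧ Tendsto (fun t ↦ dist (f^[t] x) (f^[t] (f^[d] x))) atTop (𝓝 0) := by
  choose ρ hρ using fun k ↦ exists_tendsto_dist_iterate hf x (f^[k] x)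
  obtain ⟨y, -, τ, hτ, hy⟩ := hK.tendsto_subseq hx
  have hdist (i k : ℕ) : dist (f^[i] y) (f^[i + k] y) = ρ k :=
    dist_iterate_eq_of_tendsto_subseq hf.continuous hτ.tendsto_atTop hy (hρ k) i
  have hincr : IsMaxIncrement (fun θ t ↦ φ θ (f^[t] y)) ρ := fun i k ↦ hdist i k ▸ hφ _ _
  have hbdd : BddAbove (Set.range ρ) := by
    refine ⟨Metric.diam K, ?_⟩
    rintro _ ⟨k, rfl⟩
    refine le_of_tendsto' (hρ k) fun t ↦ ?_
    rw [← Function.iterate_add_apply]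
    exact Metric.dist_le_diam_of_mem hK.isBounded (hx t) (hx (t + k))
  obtain ⟨d, hd, hρd⟩ := hincr.exists_pos_map_nonpos hbdd
  have hρd_nonneg : 0 ≤ ρ d := ge_of_tendsto' (hρ d) fun _ ↦ dist_nonneg
  exact ⟨d, hd, hρd.antisymm hρd_nonneg ▸ hρ d⟩

theorem exists_isPeriodicPt_tendsto_dist_iterate {α Θ : Type*} [MetricSpace α] [Finite Θ]
    {φ : Θ → α → ℝ} (hφ : RealizesDist φ) {f : α → α} (hf : LipschitzWith 1 f) {K : Set α}
    (hK : IsCompact K) {x : α} (hx : ∀ t, f^[t] x ∈ K) :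
    ∃ z d, 0 < d ∧ Function.IsPeriodicPt f d z ∧
      Tendsto (fun t ↦ dist (f^[t] x) (f^[t] z)) atTop (𝓝 0) := by
  obtain ⟨d, hd, hasymp⟩ := exists_pos_tendsto_dist_iterate_iterate hφ hf hK hx
  obtain ⟨z, -, τ, hτ, hz⟩ := hK.tendsto_subseq fun n ↦ hx (n * d)
  have hτd : Tendsto (fun n ↦ τ n * d) atTop atTop :=
    hτ.tendsto_atTop.atTop_mul_const' hd
  have hper : Function.IsPeriodicPt f d z := by
    have := dist_iterate_eq_of_tendsto_subseq hf.continuous hτd hz hasymp 0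
    rw [zero_add] at this
    exact (dist_eq_zero.1 this).symm
  refine ⟨z, d, hd, hper, (tendsto_iff_tendsto_subseq_of_antitone
    (antitone_dist_iterate_s6 hf x z) hτd).2 ?_⟩
  refine (tendsto_iff_dist_tendsto_zero.1 hz).congr fun n ↦ ?_
  rw [Function.comp_apply, Function.comp_apply, (hper.const_mul (τ n)).eq]

theorem tendsto_iterate_mul_of_tendsto_dist {x z : α} {d : ℕ} (hd : 0 < d)
    (hz : Function.IsPeriodicPt f d z)
    (hxz : Tendsto (fun t ↦ dist (f^[t] x) (f^[t] z)) atTop (𝓝 0)) :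
    Tendsto (fun n ↦ f^[n * d] x) atTop (𝓝 z) := by
  refine tendsto_iff_dist_tendsto_zero.2 ((hxz.comp (tendsto_id.atTop_mul_const' hd)).congr
    fun n ↦ ?_)
  rw [Function.comp_apply, id, (hz.const_mul n).eq]

end Nonexpansive

theorem isPeriodicPt_of_tendsto_iterate {ι α : Type*} [TopologicalSpace α] [T2Space α]
    {f g : α → α} (hg : Continuous g) (hgf : Function.Commute g f) {e : ℕ} {x z : α}
    (hx : Function.IsPeriodicPt g e x) {l : Filter ι} [l.NeBot] {τ : ι → ℕ}
    (hz : Tendsto (fun n ↦ f^[τ n] x) l (𝓝 z)) : Function.IsPeriodicPt g e z :=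
  (isClosed_eq (hg.iterate e) continuous_id).mem_of_tendsto hz
    (Eventually.of_forall fun n ↦ hx.map (hgf.symm.iterate_left (τ n)))

theorem finite_range_iterate_of_isPeriodicPt {α : Type*} {f : α → α} {d : ℕ} (hd : 0 < d) {z : α}
    (hz : Function.IsPeriodicPt f d z) : (Set.range fun t ↦ f^[t] z).Finite := by
  refine ((Set.finite_Iio d).image fun t ↦ f^[t] z).subset ?_
  rintro _ ⟨t, rfl⟩
  exact ⟨t % d, Nat.mod_lt t hd, hz.iterate_mod_apply t⟩

theorem iterate_noncyclic_approaches_more_cyclic_general {X A Θ : Type*} [MetricSpace X] [Finite Θ]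
    {φ : Θ → X → ℝ} (hφ : RealizesDist φ) {Q : A → X → X} (hcont : ∀ a, Continuous (Q a))
    {a₀ : A} (hLip : LipschitzWith 1 (Q a₀)) (hcomm : ∀ a, Function.Commute (Q a) (Q a₀))
    {K : Set X} (hK : IsCompact K) {x : X} (hx : ∀ t, (Q a₀)^[t] x ∈ K) :
    ∃ S : Set X, S.Finite ∧
      (∀ ε > 0, ∃ n, ∀ t ≥ n, ∃ x' ∈ S, dist ((Q a₀)^[t] x) x' ≤ ε) ∧
      ∀ x' ∈ S, insert a₀ (cyclicSet Q x) ⊆ cyclicSet Q x' := by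
  obtain ⟨z, d, hd, hz, hxz⟩ := exists_isPeriodicPt_tendsto_dist_iterate hφ hLip hK hx
  have hlim := tendsto_iterate_mul_of_tendsto_dist hd hz hxz
  refine ⟨Set.range fun t ↦ (Q a₀)^[t] z, finite_range_iterate_of_isPeriodicPt hd hz, ?_, ?_⟩
  · intro ε hε
    obtain ⟨n, hn⟩ := eventually_atTop.1 (hxz.eventually_le_const hε)
    exact ⟨n, fun t ht ↦ ⟨_, ⟨t, rfl⟩, hn t ht⟩⟩
  · rintro _ ⟨t, rfl⟩
    refine Set.insert_subset ⟨d, hd, hz.apply_iterate t⟩ ?_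
    rintro b ⟨e, he, hbx⟩
    have hbz := isPeriodicPt_of_tendsto_iterate (hcont b) (hcomm b) hbx hlim
    exact ⟨e, he, hbz.map ((hcomm b).symm.iterate_left t)⟩

/-- Iterating a non-cyclic map of a commuting `1`-Lipschitz family on a compact subset of `ℝ^m`
with the `ℓ¹` norm approaches a finite set of states at which strictly more maps are cyclic. -/
theorem iterate_noncyclic_approaches_more_cyclic
    {m : ℕ} {A : Type*} [Fintype A] [Nonempty A]
    (X : Set (PiLp 1 fun _ : Fin m => ℝ)) (hXne : X.Nonempty) (hXc : IsCompact X)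
    (Q : A → X → X) (hLip : ∀ a, LipschitzWith 1 (Q a))
    (hcomm : ∀ a b, Q a ∘ Q b = Q b ∘ Q a)
    (x : X) (a₀ : A) (ha₀ : ¬ Cyclic Q a₀ x) (ε : ℝ) (hε : 0 < ε) :
    ∃ (n : ℕ) (S : Set X), S.Finite ∧
      (∀ t ≥ n, ∃ x' ∈ S, dist ((Q a₀)^[t] x) x' ≤ ε) ∧
      (∀ x' ∈ S, insert a₀ (cyclicSet Q x) ⊆ cyclicSet Q x' ∧
        (cyclicSet Q x).ncard + 1 ≤ (cyclicSet Q x').ncard) := by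
  have := isCompact_iff_compactSpace.1 hXc
  obtain ⟨S, hS, happroach, hcyclic⟩ := iterate_noncyclic_approaches_more_cyclic_general
    (realizesDist_signSum.comp_isometry isometry_subtype_coe) (fun a ↦ (hLip a).continuous)
    (hLip a₀) (fun a ↦ congrFun (hcomm a a₀)) isCompact_univ fun t ↦ Set.mem_univ ((Q a₀)^[t] x)
  obtain ⟨n, hn⟩ := happroach ε hε
  exact ⟨n, S, hS, hn, fun x' hx' ↦ ⟨hcyclic x' hx', Set.ncard_lt_ncard
    (Set.ssubset_iff_insert.2 ⟨a₀, ha₀, hcyclic x' hx'⟩) (Set.toFinite _)⟩⟩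
end
end

section
/- Let X, A and (Q_a)_{a ∈ A} be a commuting 1-Lipschitz family on a compact subset of ℝ^m with the ℓ¹ norm. Let x₁ ∈ X, let k ≥ 1 be an integer with card C(x₁) ≥ k − 1, and let η > 0. Write Φ_k = {x ∈ X : card C(x) ≥ k}. Then the set {y ∈ X : y is reachable from x₁ and ‖y − x'‖₁ > η for every x' ∈ Φ_k} is finite. -/
/-!
The `ℓ¹` norm on `ℝ^m` is polyhedral: it embeds isometrically in a finite product of copies of `ℝ`
with the supremum norm. A compact abelian group with an invariant metric of this kind is finite.
Indeed, at a local maximum `T` of its norm some coordinate is constant on an open set and jumps by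
`‖T‖` under translation by `T`. Hence the norm is constant near `T`, which makes the group totally
disconnected; and on an open set admitting no further constant coordinates the jump is absurd for
small `T ≠ 0`, which makes the group discrete.

Along an ultrafilter the orbit of `x` under a nonexpansive map `f` converges to a two-sided orbit
whose distances are invariant under shifts. The completion of `ℤ` for this distance is such a group,
so `f` has a periodic point among the limit points of every orbit.

By commutativity a reachable state depends only on how often each map is applied. If `a` is cyclic
at `x₁`, a period's worth of applications of `a` can be dropped. Otherwise the periodic limit point
of the orbit under `Q a` is cyclic for `a` and for all of `C(x₁)`, so that enough applications of
`a` bring the state within `η` of `Φ_k`, where it remains. Either way each multiplicity is bounded.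
-/


open Filter Topology

noncomputable section

section PolyhedralGroup

variable {G ι : Type*}

/-- The coordinates of `e` that are constant on `U`. -/
def constCoords (e : G → ι → ℝ) (U : Set G) : Set ι :=
  {i | ∀ g ∈ U, ∀ g' ∈ U, e g i = e g' i}

theorem constCoords_antitone (e : G → ι → ℝ) : Antitone (constCoords e) :=
  fun _ _ hUV _ hi g hg g' hg' => hi g (hUV hg) g' (hUV hg')

theorem exists_isOpen_constCoords_maximal [TopologicalSpace G] [Nonempty G] [Finite ι]
    (e : G → ι → ℝ) :
    ∃ U : Set G, IsOpen U ∧ U.Nonempty ∧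
      ∀ V ⊆ U, IsOpen V → V.Nonempty → constCoords e V ⊆ constCoords e U := by
  obtain ⟨U, ⟨hU, hUne⟩, hmax⟩ := exists_maximalFor_of_wellFoundedGT
    (fun U : Set G => IsOpen U ∧ U.Nonempty) (constCoords e) ⟨_, isOpen_univ, Set.univ_nonempty⟩
  exact ⟨U, hU, hUne, fun V hVU hV hVne => hmax ⟨hV, hVne⟩ (constCoords_antitone e hVU)⟩

theorem exists_dist_apply_eq_dist {X : ι → Type*} [Fintype ι] [Nonempty ι]
    [∀ i, PseudoMetricSpace (X i)] (x y : ∀ i, X i) : ∃ i, dist (x i) (y i) = dist x y := by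
  obtain ⟨i, hi⟩ := Finite.exists_max fun i => dist (x i) (y i)
  exact ⟨i, (dist_le_pi_dist x y i).antisymm ((dist_pi_le_iff dist_nonneg).2 hi)⟩

theorem lipschitzWith_apply_of_isometry [Fintype ι] [PseudoEMetricSpace G] {e : G → ι → ℝ}
    (he : Isometry e) (i : ι) : LipschitzWith 1 fun g => e g i := by
  simpa only [one_mul, Function.comp_def] using (LipschitzWith.eval i).comp he.lipschitz

theorem eq_of_increment_eq [SeminormedAddCommGroup G] {φ : G → ℝ} (hφ : LipschitzWith 1 φ)
    {T g g' : G} {c : ℝ}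
    (hg : φ (g + T) - φ g = c) (hg' : φ (g' + T) - φ g' = c)
    (h : ‖T + (g - g')‖ ≤ |c|) (h' : ‖T + (g' - g)‖ ≤ |c|) : φ g = φ g' := by
  have increment_le (u v : G) : |φ (u + T) - φ v| ≤ ‖T + (u - v)‖ := by
    have := hφ.dist_le_mul (u + T) v
    rwa [Real.dist_eq, dist_eq_norm, NNReal.coe_one, one_mul, add_comm u, add_sub_assoc,
      add_comm T] at this
  have hg_le : (c + (φ g - φ g')) ^ 2 ≤ c ^ 2 := by
    have := sq_le_sq.2 ((increment_le g g').trans h)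
    rwa [← hg, ← add_sub_assoc, sub_add_cancel, hg]
  have hg'_le : (c - (φ g - φ g')) ^ 2 ≤ c ^ 2 := by
    have := sq_le_sq.2 ((increment_le g' g).trans h')
    rwa [← hg', ← sub_add, sub_right_comm, sub_add_cancel, hg']
  exact sub_eq_zero.1 (sq_nonpos_iff _ |>.1 (by linarith))

variable [NormedAddCommGroup G] [Fintype ι] [Nonempty ι] {e : G → ι → ℝ}

theorem exists_isOpen_const_jump_of_isLocalMax_norm [CompleteSpace G] (he : Isometry e) {T : G}
    (hT : IsLocalMax norm T) {U : Set G} (hU : IsOpen U) (hUne : U.Nonempty) :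
    ∃ V ⊆ U, IsOpen V ∧ V.Nonempty ∧
      ∃ i ∈ constCoords e V, ∀ g ∈ V, dist (e (g + T) i) (e g i) = ‖T‖ := by
  obtain ⟨r, hr, hmax⟩ := Metric.eventually_nhds_iff.1 hT
  let C (p : ι × ({‖T‖, -‖T‖} : Set ℝ)) : Set G := {g | e (g + T) p.1 - e g p.1 = p.2}
  have hC_closed (p) : IsClosed (C p) := by
    have := (lipschitzWith_apply_of_isometry he p.1).continuous
    exact isClosed_eq (by fun_prop) continuous_const
  have hC_cover : ⋃ p, C p = Set.univ := by
    refine Set.eq_univ_of_forall fun g => ?_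
    obtain ⟨i, hi⟩ := exists_dist_apply_eq_dist (e (g + T)) (e g)
    rw [he.dist_eq, dist_self_add_left, Real.dist_eq] at hi
    exact Set.mem_iUnion.2 ⟨(i, ⟨_, eq_or_eq_neg_of_abs_eq hi⟩), rfl⟩
  obtain ⟨g₀, hg₀U, hg₀C⟩ := (dense_iUnion_interior_of_closed hC_closed hC_cover)
    |>.inter_open_nonempty U hU hUne
  obtain ⟨⟨i, c, hc⟩, hg₀C⟩ := Set.mem_iUnion.1 hg₀C
  have hcT : |c| = ‖T‖ := by
    rcases hc with rfl | rfl <;> simp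
  let V := (U ∩ interior (C (i, ⟨c, hc⟩))) ∩ Metric.ball g₀ (r / 2)
  have jump {g : G} (hg : g ∈ V) : e (g + T) i - e g i = c :=
    (interior_subset hg.1.2 : g ∈ C _)
  have norm_le {g g' : G} (hg : g ∈ V) (hg' : g' ∈ V) : ‖T + (g - g')‖ ≤ |c| := by
    rw [hcT]
    refine hmax ?_
    rw [dist_self_add_left, ← dist_eq_norm]
    linarith [dist_triangle_right g g' g₀, Metric.mem_ball.1 hg.2, Metric.mem_ball.1 hg'.2]
  refine ⟨V, Set.inter_subset_left.trans Set.inter_subset_left,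
    (hU.inter isOpen_interior).inter Metric.isOpen_ball,
    ⟨g₀, ⟨hg₀U, hg₀C⟩, Metric.mem_ball_self (half_pos hr)⟩, i, fun g hg g' hg' => ?_,
    fun g hg => by rw [Real.dist_eq, jump hg, hcT]⟩
  exact eq_of_increment_eq (lipschitzWith_apply_of_isometry he i) (jump hg) (jump hg')
    (norm_le hg hg') (norm_le hg' hg)

theorem eventually_norm_eq_of_isLocalMax_norm [CompleteSpace G] (he : Isometry e) {T : G}
    (hT : IsLocalMax norm T) : ∀ᶠ S in 𝓝 T, ‖S‖ = ‖T‖ := by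
  obtain ⟨V, -, hV, ⟨g, hg⟩, i, hconst, hjump⟩ :=
    exists_isOpen_const_jump_of_isLocalMax_norm he hT isOpen_univ Set.univ_nonempty
  have hnhds : ∀ᶠ S in 𝓝 T, g + (S - T) ∈ V :=
    ContinuousAt.eventually_mem (by fun_prop) (hV.mem_nhds (by simpa))
  filter_upwards [hT, hnhds] with S hS hgS
  refine hS.antisymm ?_
  calc ‖T‖ = dist (e (g + (S - T) + T) i) (e g i) := by
        rw [← hjump _ hgS, hconst _ hgS _ hg]
    _ ≤ dist (g + (S - T) + T) g := by
        simpa using (lipschitzWith_apply_of_isometry he i).dist_le_mul (g + (S - T) + T) g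
    _ = ‖S‖ := by simp [add_assoc]

theorem subsingleton_of_isometry_of_preconnectedSpace [CompactSpace G] [PreconnectedSpace G]
    (he : Isometry e) : Subsingleton G := by
  obtain ⟨T, -, hT⟩ := isCompact_univ.exists_isMaxOn (f := (norm : G → ℝ)) Set.univ_nonempty
    continuous_norm.continuousOn
  have hclosed : IsClosed {S : G | ‖S‖ = ‖T‖} := isClosed_eq continuous_norm continuous_const
  have hopen : IsOpen {S : G | ‖S‖ = ‖T‖} := by
    refine isOpen_iff_mem_nhds.2 fun S (hS : ‖S‖ = ‖T‖) => ?_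
    have hSmax : IsLocalMax norm S := Eventually.of_forall fun R => hS ▸ hT (Set.mem_univ R)
    exact hS ▸ eventually_norm_eq_of_isLocalMax_norm he hSmax
  have huniv : {S : G | ‖S‖ = ‖T‖} = Set.univ := IsClopen.eq_univ ⟨hclosed, hopen⟩ ⟨T, rfl⟩
  have norm_eq (S : G) : ‖S‖ = ‖T‖ := Set.eq_univ_iff_forall.1 huniv S
  exact subsingleton_of_forall_eq 0 fun S =>
    norm_eq_zero.1 ((norm_eq S).trans ((norm_eq 0).symm.trans norm_zero))

theorem totallyDisconnectedSpace_of_isometry [CompactSpace G] (he : Isometry e) :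
    TotallyDisconnectedSpace G := by
  let K : AddSubgroup G := AddSubgroup.connectedComponentOfZero G
  have : CompactSpace K :=
    isCompact_iff_compactSpace.1 (isClosed_connectedComponent (x := (0 : G))).isCompact
  have : PreconnectedSpace K :=
    isPreconnected_iff_preconnectedSpace.1 (isPreconnected_connectedComponent (x := (0 : G)))
  have : Subsingleton K :=
    subsingleton_of_isometry_of_preconnectedSpace (he.comp isometry_subtype_coe)
  refine totallyDisconnectedSpace_iff_connectedComponent_zero.2 ?_
  exact (Set.subsingleton_coe (K : Set G)).1 this |>.eq_singleton_of_mem mem_connectedComponent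

theorem exists_pos_forall_isLocalMax_norm_eq_zero [CompleteSpace G] (he : Isometry e) :
    ∃ r > 0, ∀ T : G, IsLocalMax norm T → ‖T‖ < r → T = 0 := by
  obtain ⟨U, hU, ⟨g₀, hg₀⟩, hmax⟩ := exists_isOpen_constCoords_maximal e
  obtain ⟨r, hr, hball⟩ := Metric.isOpen_iff.1 hU g₀ hg₀
  refine ⟨r / 2, half_pos hr, fun T hT hTr => ?_⟩
  have hsub : Metric.ball g₀ (r / 2) ⊆ U :=
    (Metric.ball_subset_ball (half_le_self hr.le)).trans hball
  obtain ⟨V, hVball, hV, ⟨g, hg⟩, i, hi, hjump⟩ := exists_isOpen_const_jump_of_isLocalMax_norm he hT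
    Metric.isOpen_ball ⟨g₀, Metric.mem_ball_self (half_pos hr)⟩
  have hiU : i ∈ constCoords e U := hmax V (hVball.trans hsub) hV ⟨g, hg⟩ hi
  have hgT : g + T ∈ U := hball <| by
    rw [Metric.mem_ball]
    linarith [dist_triangle (g + T) g g₀, Metric.mem_ball.1 (hVball hg), dist_self_add_left T g]
  rw [← norm_eq_zero, ← hjump g hg, hiU _ hgT _ (hsub (hVball hg)), dist_self]

end PolyhedralGroup

section FiniteOrbit

variable {ι : Type*} [Fintype ι]

theorem finite_of_isometry_of_compactSpace {G : Type*} [NormedAddCommGroup G] [CompactSpace G]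
    {e : G → ι → ℝ} (he : Isometry e) : Finite G := by
  rcases isEmpty_or_nonempty ι with _ | _
  · exact Finite.of_injective e he.injective
  have := totallyDisconnectedSpace_of_isometry he
  obtain ⟨r, hr, hsmall⟩ := exists_pos_forall_isLocalMax_norm_eq_zero he
  obtain ⟨V, hV, h0V, hVr⟩ := compact_exists_isClopen_in_isOpen
    (Metric.isOpen_ball (x := (0 : G)) (ε := r)) (Metric.mem_ball_self hr)
  obtain ⟨T, hTV, hT⟩ := hV.isClosed.isCompact.exists_isMaxOn (f := (norm : G → ℝ)) ⟨0, h0V⟩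
    continuous_norm.continuousOn
  obtain rfl : T = 0 := hsmall T (hT.isLocalMax (hV.isOpen.mem_nhds hTV))
    (mem_ball_zero_iff.1 (hVr hTV))
  have hV0 : V = {0} := Set.Subset.antisymm
    (fun t ht => norm_le_zero_iff.1 ((hT ht).trans norm_zero.le)) (Set.singleton_subset_iff.2 h0V)
  have : DiscreteTopology G := discreteTopology_of_isOpen_singleton_zero (hV0 ▸ hV.isOpen)
  exact finite_of_compact_of_discrete

theorem finite_range_of_isometry_of_isBounded {Z : Type*} [SeminormedAddCommGroup Z]
    {y : Z → ι → ℝ} (hy : Isometry y) (hb : Bornology.IsBounded (Set.range y)) :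
    (Set.range y).Finite := by
  have htb : TotallyBounded (Set.univ : Set Z) := by
    simpa only [Set.preimage_range] using
      totallyBounded_preimage hy.isUniformInducing
        (hb.isCompact_closure.totallyBounded.subset subset_closure)
  have : CompactSpace (UniformSpace.Completion Z) := by
    refine ⟨isCompact_iff_totallyBounded_isComplete.2 ⟨?_, isComplete_univ⟩⟩
    simpa [UniformSpace.Completion.denseRange_coe.closure_range] using
      (htb.image (UniformSpace.Completion.uniformContinuous_coe Z)).closure
  have := finite_of_isometry_of_compactSpace hy.completion_extension
  refine (Set.finite_range (UniformSpace.Completion.extension y)).subset ?_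
  rintro _ ⟨a, rfl⟩
  exact ⟨a, UniformSpace.Completion.extension_coe hy.uniformContinuous a⟩

theorem finite_range_of_dist_add_right_eq {Z : Type*} [AddCommGroup Z] {y : Z → ι → ℝ}
    (hb : Bornology.IsBounded (Set.range y))
    (hinv : ∀ a b c, dist (y (a + c)) (y (b + c)) = dist (y a) (y b)) :
    (Set.range y).Finite := by
  let p : AddGroupSeminorm Z :=
    { toFun a := dist (y a) (y 0)
      map_zero' := dist_self _
      add_le' a b := by
        have hab := hinv a 0 b
        rw [zero_add] at hab
        exact hab ▸ dist_triangle _ _ _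
      neg' a := by
        have ha := hinv (-a) 0 a
        rwa [zero_add, neg_add_cancel, dist_comm, eq_comm] at ha }
  let _ : SeminormedAddCommGroup Z := p.toSeminormedAddCommGroup
  have hy : Isometry y := Isometry.of_dist_eq fun a b => by
    have hab := hinv (a - b) 0 b
    rw [zero_add, sub_add_cancel] at hab
    exact hab.trans (dist_eq_norm a b).symm
  exact finite_range_of_isometry_of_isBounded hy hb

end FiniteOrbit

section LimitOrbit

variable {X : Type*} {f : X → X}

theorem exists_tendsto_dist_iterate_toNat_add [PseudoMetricSpace X] (hf : LipschitzWith 1 f)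
    (x : X) (a b : ℤ) :
    ∃ L, Tendsto (fun k : ℤ => dist (f^[(k + a).toNat] x) (f^[(k + b).toNat] x)) atTop (𝓝 L) := by
  let d (k : ℤ) : ℝ := dist (f^[(k + a).toNat] x) (f^[(k + b).toNat] x)
  let N : ℤ := max (-a) (-b)
  have hd {k : ℤ} (hk : N ≤ k) : d (k + 1) ≤ d k := by
    have hka : (k + 1 + a).toNat = (k + a).toNat + 1 := by omega
    have hkb : (k + 1 + b).toNat = (k + b).toNat + 1 := by omega
    simpa only [d, hka, hkb, Function.iterate_succ_apply', NNReal.coe_one, one_mul] using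
      hf.dist_le_mul (f^[(k + a).toNat] x) (f^[(k + b).toNat] x)
  have hanti : Antitone fun k => d (max k N) := antitone_int_of_succ_le fun k => by
    rcases lt_or_ge k N with hk | hk
    · rw [max_eq_right hk, max_eq_right hk.le]
    · rw [max_eq_left hk, max_eq_left (hk.trans (lt_add_one k).le)]
      exact hd hk
  have hbdd : BddBelow (Set.range fun k => d (max k N)) :=
    ⟨0, Set.forall_mem_range.2 fun _ => dist_nonneg⟩
  refine ⟨_, (tendsto_atTop_ciInf hanti hbdd).congr' ?_⟩
  filter_upwards [eventually_ge_atTop N] with k hk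
  rw [max_eq_left hk]

variable [MetricSpace X] [CompactSpace X]

theorem exists_limit_orbit (hf : LipschitzWith 1 f) (x : X) :
    ∃ y : ℤ → X, MapClusterPt (y 0) atTop (fun n : ℕ => f^[n] x) ∧ (∀ n, f (y n) = y (n + 1)) ∧
      ∀ a b c, dist (y (a + c)) (y (b + c)) = dist (y a) (y b) := by
  have : Nonempty X := ⟨x⟩
  let 𝒰 : Ultrafilter ℤ := Ultrafilter.of atTop
  have h𝒰 : (𝒰 : Filter ℤ) ≤ atTop := Ultrafilter.of_le atTop
  let orbit (k : ℤ) : X := f^[k.toNat] x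
  let y (n : ℤ) : X := (𝒰.map fun k => orbit (k + n)).lim
  have hy (n : ℤ) : Tendsto (fun k => orbit (k + n)) 𝒰 (𝓝 (y n)) :=
    (𝒰.map fun k => orbit (k + n)).le_nhds_lim
  refine ⟨y, ?_, fun n => ?_, fun a b c => ?_⟩
  · have hy0 : MapClusterPt (y 0) atTop orbit := by
      simpa only [add_zero] using (hy 0).mapClusterPt.mono h𝒰
    rwa [MapClusterPt, ← Nat.map_cast_int_atTop, Filter.map_map] at hy0
  · refine tendsto_nhds_unique ((hf.continuous.tendsto (y n)).comp (hy n))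
      ((hy (n + 1)).congr' ?_)
    filter_upwards [h𝒰 (eventually_ge_atTop (-n))] with k hk
    have hkn : (k + (n + 1)).toNat = (k + n).toNat + 1 := by omega
    simp only [orbit, hkn, Function.iterate_succ_apply', Function.comp_apply]
  · obtain ⟨L, hL⟩ := exists_tendsto_dist_iterate_toNat_add hf x a b
    have hLc := hL.comp (tendsto_atTop_add_const_right atTop c tendsto_id)
    have hab : dist (y a) (y b) = L :=
      tendsto_nhds_unique ((hy a).dist (hy b)) (hL.mono_left h𝒰)
    have habc : dist (y (a + c)) (y (b + c)) = L := by
      refine tendsto_nhds_unique ((hy _).dist (hy _)) ((hLc.mono_left h𝒰).congr fun k => ?_)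
      simp only [orbit, Function.comp_apply, id_eq, add_assoc, add_comm c]
    rw [hab, habc]

theorem exists_mem_periodicPts_mapClusterPt {ι : Type*} [Fintype ι] {e : X → ι → ℝ}
    (he : Isometry e) (hf : LipschitzWith 1 f) (x : X) :
    ∃ z ∈ Function.periodicPts f, MapClusterPt z atTop (fun n : ℕ => f^[n] x) := by
  obtain ⟨y, hy0, hstep, hinv⟩ := exists_limit_orbit hf x
  have hiter (n : ℕ) : f^[n] (y 0) = y n := by
    induction n with
    | zero => rfl
    | succ n ih => rw [Function.iterate_succ_apply', ih, hstep, Nat.cast_succ]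
  have hb : Bornology.IsBounded (Set.range (e ∘ y)) :=
    (isCompact_range he.continuous).isBounded.subset (Set.range_comp_subset_range y e)
  have hfin : (Set.range (e ∘ y)).Finite :=
    finite_range_of_dist_add_right_eq hb fun a b c => by
      simpa only [Function.comp_apply, he.dist_eq] using hinv a b c
  obtain ⟨a, b, hab, heq⟩ : ∃ a b, a < b ∧ y a = y b := by
    obtain ⟨a, -, b, -, hab, heq⟩ := Set.infinite_univ.exists_lt_map_eq_of_mapsTo
      (fun n _ => Set.mem_range_self (f := e ∘ y) n) hfin
    exact ⟨a, b, hab, he.injective heq⟩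
  refine ⟨y 0, ⟨(b - a).toNat, by omega, ?_⟩, hy0⟩
  have hshift := hinv (b - a) 0 a
  rw [sub_add_cancel, zero_add, heq, dist_self, eq_comm, dist_eq_zero] at hshift
  rw [Function.IsPeriodicPt, Function.IsFixedPt, hiter, Int.toNat_of_nonneg (by omega), hshift]

end LimitOrbit

section CommutingFamily

variable {X A : Type*} {Q : A → X → X}

theorem cyclicSet_subset_of_commute {g : X → X} (hg : ∀ a, Function.Commute g (Q a)) (x : X) :
    cyclicSet Q x ⊆ cyclicSet Q (g x) :=
  fun a ha => (hg a).semiconj.mapsTo_periodicPts ha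

theorem cyclicSet_subset_of_mapClusterPt [TopologicalSpace X] [T2Space X]
    (hQ : ∀ a, Continuous (Q a)) (hcomm : ∀ a b, Function.Commute (Q a) (Q b)) {a : A} {x z : X}
    (hz : MapClusterPt z atTop fun n : ℕ => (Q a)^[n] x) : cyclicSet Q x ⊆ cyclicSet Q z := by
  rintro b ⟨d, hd, hb⟩
  refine ⟨d, hd, (isClosed_eq ((hQ b).iterate d) continuous_id).mem_of_mapClusterPt hz ?_⟩
  refine Eventually.of_forall fun n => ?_
  have := ((hcomm b a).iterate_iterate d n).eq x
  rwa [hb] at this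

section

variable [LeftCommutative Q]

theorem Reachable.exists_foldr_eq {x y : X} (h : Reachable Q x y) :
    ∃ s : Multiset A, s.foldr Q x = y := by
  obtain ⟨l, rfl⟩ := h
  exact ⟨l, Multiset.coe_foldr Q x l⟩

theorem foldr_replicate_eq_iterate (a : A) (n : ℕ) (x : X) :
    (Multiset.replicate n a).foldr Q x = (Q a)^[n] x := by
  induction n with
  | zero => rfl
  | succ n ih =>
    rw [Multiset.replicate_succ, Multiset.foldr_cons, ih, Function.iterate_succ_apply']

theorem commute_foldr (s : Multiset A) (a : A) :
    Function.Commute (fun x => s.foldr Q x) (Q a) := fun x => by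
  change s.foldr Q (Q a x) = Q a (s.foldr Q x)
  rw [← Multiset.foldr_cons Q, ← Multiset.singleton_add, add_comm, Multiset.foldr_add,
    Multiset.foldr_singleton]

theorem lipschitzWith_foldr [PseudoEMetricSpace X] (hLip : ∀ a, LipschitzWith 1 (Q a))
    (s : Multiset A) : LipschitzWith 1 fun x => s.foldr Q x := by
  induction s using Multiset.induction_on with
  | empty => exact LipschitzWith.id
  | cons a s ih =>
    simpa only [Multiset.foldr_cons, one_mul, Function.comp_def] using (hLip a).comp ih

end

theorem finite_inter_range_multiset_of_reducible [Finite A] {β : Type*} (F : Multiset A → β)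
    (S : Set β) (h : ∀ a, ∃ n > 0, ∀ s, F (s + Multiset.replicate n a) ∈ S →
      F (s + Multiset.replicate n a) = F s) : (S ∩ Set.range F).Finite := by
  classical
  choose N hN_pos hN using h
  have hfin : {s : Multiset A | ∀ a, s.count a < N a}.Finite :=
    (Set.Finite.pi' fun a => Set.finite_Iio (N a)).preimage
      (f := fun s a => Multiset.count a s) (fun s _ t _ hst => Multiset.ext.2 (congrFun hst))
  refine (hfin.image F).subset ?_
  rintro y ⟨hyS, hy⟩
  obtain ⟨s, hs⟩ := exists_minimal_of_wellFoundedLT (fun s => F s = y) hy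
  refine ⟨s, fun a => ?_, hs.prop⟩
  by_contra! hNs
  obtain ⟨t, rfl⟩ := Multiset.le_iff_exists_add.1 (Multiset.le_count_iff_replicate_le.1 hNs)
  rw [add_comm] at hs
  have ht : F t = y := (hN a t (hs.prop ▸ hyS)).symm.trans hs.prop
  have hcard := Multiset.card_le_card (hs.le_of_le ht (Multiset.le_add_right t _))
  rw [Multiset.card_add, Multiset.card_replicate] at hcard
  exact (hN_pos a).not_ge (by omega)

variable {ι : Type*} [MetricSpace X] [CompactSpace X] [Fintype ι] [Finite A] {e : X → ι → ℝ}

theorem exists_iterate_dist_le_of_not_cyclic (he : Isometry e) (hLip : ∀ a, LipschitzWith 1 (Q a))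
    (hcomm : ∀ a b, Function.Commute (Q a) (Q b)) {a : A} {x : X} (ha : ¬ Cyclic Q a x)
    {η : ℝ} (hη : 0 < η) :
    ∃ n > 0, ∃ z, dist ((Q a)^[n] x) z ≤ η ∧ (cyclicSet Q x).ncard + 1 ≤ (cyclicSet Q z).ncard := by
  obtain ⟨z, hza, hz⟩ := exists_mem_periodicPts_mapClusterPt he (hLip a) x
  have hfreq : ∃ᶠ n in atTop, dist ((Q a)^[n] x) z ≤ η :=
    hz.frequently (Metric.closedBall_mem_nhds z hη)
  obtain ⟨n, hnz, hn⟩ := (hfreq.and_eventually (eventually_gt_atTop 0)).exists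
  have hsub : insert a (cyclicSet Q x) ⊆ cyclicSet Q z := Set.insert_subset hza
    (cyclicSet_subset_of_mapClusterPt (fun b => (hLip b).continuous) hcomm hz)
  refine ⟨n, hn, z, hnz, ?_⟩
  rw [← Set.ncard_insert_of_notMem (show a ∉ cyclicSet Q x from ha) (Set.toFinite _)]
  exact Set.ncard_le_ncard hsub (Set.toFinite _)

theorem far_reachable_set_finite_general (he : Isometry e) (hLip : ∀ a, LipschitzWith 1 (Q a))
    (hcomm : ∀ a b, Function.Commute (Q a) (Q b)) (x₁ : X) {k : ℕ}
    (hk : k ≤ (cyclicSet Q x₁).ncard + 1) {η : ℝ} (hη : 0 < η) :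
    {y : X | Reachable Q x₁ y ∧
      ∀ x' : X, k ≤ (cyclicSet Q x').ncard → η < dist y x'}.Finite := by
  have : LeftCommutative Q := ⟨fun a b => hcomm a b⟩
  let far : Set X := {y | ∀ x' : X, k ≤ (cyclicSet Q x').ncard → η < dist y x'}
  suffices (far ∩ Set.range fun s : Multiset A => s.foldr Q x₁).Finite from
    this.subset fun y hy => ⟨hy.2, hy.1.exists_foldr_eq⟩
  refine finite_inter_range_multiset_of_reducible _ far fun a => ?_
  simp only [Multiset.foldr_add, foldr_replicate_eq_iterate]
  by_cases ha : Cyclic Q a x₁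
  · obtain ⟨d, hd, hper⟩ := ha
    exact ⟨d, hd, fun s _ => by rw [hper]⟩
  · obtain ⟨n, hn, z, hnz, hcard⟩ := exists_iterate_dist_le_of_not_cyclic he hLip hcomm ha hη
    refine ⟨n, hn, fun s hfar => absurd (hfar (s.foldr Q z) ?_) (not_lt.2 ?_)⟩
    · exact (hk.trans hcard).trans
        (Set.ncard_le_ncard (cyclicSet_subset_of_commute (commute_foldr s) z) (Set.toFinite _))
    · simpa using ((lipschitzWith_foldr hLip s).dist_le_mul _ z).trans (by simpa using hnz)

end CommutingFamily

theorem isometry_sum_sign_mul (ι : Type*) [Fintype ι] [DecidableEq ι] :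
    Isometry fun (x : PiLp 1 fun _ : ι => ℝ) (s : ι → SignType) => ∑ j, (s j : ℝ) * x j := by
  refine Isometry.of_dist_eq fun x y => ?_
  have hdist : dist x y = ∑ j, |x j - y j| := by
    simp only [PiLp.dist_eq_of_L1, Real.dist_eq]
  have hsub (s : ι → SignType) : dist (∑ j, (s j : ℝ) * x j) (∑ j, (s j : ℝ) * y j) =
      |∑ j, (s j : ℝ) * (x j - y j)| := by
    simp only [Real.dist_eq, mul_sub, Finset.sum_sub_distrib]
  have hsign (s : SignType) : |(s : ℝ)| ≤ 1 := by cases s <;> simp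
  rw [hdist]
  apply le_antisymm
  · refine (dist_pi_le_iff (by positivity)).2 fun s => ?_
    rw [hsub]
    refine (Finset.abs_sum_le_sum_abs _ _).trans (Finset.sum_le_sum fun j _ => ?_)
    rw [abs_mul]
    exact mul_le_of_le_one_left (abs_nonneg _) (hsign (s j))
  · refine le_trans (Eq.le ?_) (dist_le_pi_dist _ _ fun j => SignType.sign (x j - y j))
    simp only [hsub, sign_mul_self]
    exact (abs_of_nonneg (by positivity)).symm

/-- For a commuting `1`-Lipschitz family on a compact subset of `ℝ^m` with the `ℓ¹` norm:
if `card C(x₁) ≥ k - 1`, the set of states reachable from `x₁` staying at `ℓ¹`-distance more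
than `η` from every state with at least `k` cyclic maps is finite. -/
theorem far_reachable_set_finite
    {m : ℕ} {A : Type*} [Fintype A] [Nonempty A]
    (X : Set (PiLp 1 fun _ : Fin m => ℝ)) (hXne : X.Nonempty) (hXc : IsCompact X)
    (Q : A → X → X) (hLip : ∀ a, LipschitzWith 1 (Q a))
    (hcomm : ∀ a b, Q a ∘ Q b = Q b ∘ Q a)
    (x₁ : X) (k : ℕ) (hk : 1 ≤ k) (hx₁ : k - 1 ≤ (cyclicSet Q x₁).ncard)
    (η : ℝ) (hη : 0 < η) :
    {y : X | Reachable Q x₁ y ∧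
      ∀ x' : X, k ≤ (cyclicSet Q x').ncard → η < dist y x'}.Finite := by
  have : CompactSpace X := isCompact_iff_compactSpace.1 hXc
  exact far_reachable_set_finite_general
    ((isometry_sum_sign_mul (Fin m)).comp isometry_subtype_coe) hLip
    (fun a b => congrFun (hcomm a b)) x₁ (Nat.sub_le_iff_le_add.1 hx₁) hη
end
end
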